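/- Let G and G' be two finitely generated co-Hopfian virtually free groups. Then the following are equivalent: (1) G and G' are ∀∃-equivalent; (2) G and G' are elementarily equivalent; (3) G and G' are isomorphic. -/

import Mathlib

open FirstOrder Language

/-- Function symbols of the first-order language of groups:
a binary multiplication, a unary inverse and a constant for the identity. -/
inductive GroupFunc : ℕ → Type
  | mul : GroupFunc 2
  | inv : GroupFunc 1
  | one : GroupFunc 0

/-- The first-order language of groups. -/
def groupLang : FirstOrder.Language :=
  { Functions := GroupFunc
    Relations := fun _ => Empty }

/-- Every group is a structure for the language of groups in the natural way. -/
instance groupLangStructure (G : Type*) [Group G] : groupLang.Structure G where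
  funMap {n} f v :=
    match f with
    | .mul => v 0 * v 1
    | .inv => (v 0)⁻¹
    | .one => 1
  RelMap {n} r _ := r.elim

/-- Existential formulas: iterated existential quantifications of a
quantifier-free formula. -/
inductive IsExistentialQF {α : Type*} : ∀ {n : ℕ}, groupLang.BoundedFormula α n → Prop
  | of_isQF {n : ℕ} {φ : groupLang.BoundedFormula α n} (h : φ.IsQF) : IsExistentialQF φ
  | ex {n : ℕ} {φ : groupLang.BoundedFormula α (n + 1)} (h : IsExistentialQF φ) :
      IsExistentialQF φ.ex

/-- Universal formulas: iterated universal quantifications of a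
quantifier-free formula. -/
inductive IsUniversalQF {α : Type*} : ∀ {n : ℕ}, groupLang.BoundedFormula α n → Prop
  | of_isQF {n : ℕ} {φ : groupLang.BoundedFormula α n} (h : φ.IsQF) : IsUniversalQF φ
  | all {n : ℕ} {φ : groupLang.BoundedFormula α (n + 1)} (h : IsUniversalQF φ) :
      IsUniversalQF φ.all

/-- ∀∃-formulas: iterated universal quantifications of an existential formula. -/
inductive IsAE {α : Type*} : ∀ {n : ℕ}, groupLang.BoundedFormula α n → Prop
  | of_existential {n : ℕ} {φ : groupLang.BoundedFormula α n} (h : IsExistentialQF φ) : IsAE φ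
  | all {n : ℕ} {φ : groupLang.BoundedFormula α (n + 1)} (h : IsAE φ) : IsAE φ.all

/-- A group is virtually free if it has a free subgroup of finite index. -/
def VirtuallyFree (G : Type*) [Group G] : Prop :=
  ∃ H : Subgroup G, H.FiniteIndex ∧ Nonempty (IsFreeGroup H)

/-- A group is co-Hopfian if every injective endomorphism is surjective. -/
def CoHopfian (G : Type*) [Group G] : Prop :=
  ∀ φ : G →* G, Function.Injective φ → Function.Surjective φ

/-- Two homomorphisms `φ, φ' : G → G'` are equivalent if they coincide up to
conjugation on every finite subgroup of `G`. -/
def HomEquiv {G G' : Type*} [Group G] [Group G'] (φ φ' : G →* G') : Prop :=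
  ∀ H : Subgroup G, (H : Set G).Finite →
    ∃ g' : G', ∀ h ∈ H, φ' h = g' * φ h * g'⁻¹

/-- Two groups are ∀∃-equivalent if they satisfy the same ∀∃-sentences. -/
def AEEquivalent (G : Type*) (G' : Type*) [Group G] [Group G'] : Prop :=
  ∀ φ : groupLang.Sentence, IsAE φ → (G ⊨ φ ↔ G' ⊨ φ)

/-- Two groups are ∃-equivalent if they satisfy the same existential sentences. -/
def ExistentiallyEquivalent (G : Type*) (G' : Type*) [Group G] [Group G'] : Prop :=
  ∀ φ : groupLang.Sentence, IsExistentialQF φ → (G ⊨ φ ↔ G' ⊨ φ)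

/-- An endomorphism is rigid-testing: `G` is rigid if every endomorphism
equivalent to the identity is an automorphism. -/
def Rigid (G : Type*) [Group G] : Prop :=
  ∀ φ : G →* G, HomEquiv φ (MonoidHom.id G) → Function.Bijective φ

/-- `Out G` is finite, expressed as: the inner automorphisms form a finite index
subgroup of `Aut G`. -/
def OutFinite (G : Type*) [Group G] : Prop :=
  (MulAut.conj : G →* MulAut G).range.FiniteIndex

/-- Iterated composition of an endomorphism. -/
def homPow {G : Type*} [Group G] (φ : G →* G) : ℕ → (G →* G)
  | 0 => MonoidHom.id G
  | n + 1 => φ.comp (homPow φ n)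

/-- An endomorphism `φ` of `G` is class-permuting if some positive power of `φ`
is equivalent to the identity of `G`. -/
def ClassPermuting {G : Type*} [Group G] (φ : G →* G) : Prop :=
  ∃ n : ℕ, 1 ≤ n ∧ HomEquiv (homPow φ n) (MonoidHom.id G)

/-- A maximal finite subgroup: a finite subgroup maximal with respect to
inclusion among finite subgroups. -/
def MaximalFiniteSubgroup {G : Type*} [Group G] (A : Subgroup G) : Prop :=
  (A : Set G).Finite ∧ ∀ B : Subgroup G, (B : Set G).Finite → A ≤ B → A = B

/-- Two subgroups are conjugate. -/
def SubgroupConj {G : Type*} [Group G] (A B : Subgroup G) : Prop :=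
  ∃ g : G, B = A.map (MulAut.conj g).toMonoidHom

/-- A group is strongly co-Hopfian if there is a finite subset `F` of
`G \ {1}` such that every endomorphism whose kernel misses `F` is an
automorphism. -/
def StronglyCoHopfian (G : Type*) [Group G] : Prop :=
  ∃ F : Finset G, (1 : G) ∉ F ∧
    ∀ φ : G →* G, (∀ f ∈ F, φ f ≠ 1) → Function.Bijective φ

/-- A group is finitely presented. -/
def GroupFinitelyPresented (G : Type*) [Group G] : Prop :=
  ∃ (n : ℕ) (rels : Finset (FreeGroup (Fin n))),
    Nonempty (PresentedGroup (rels : Set (FreeGroup (Fin n))) ≃* G)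


/-- A tree with an oriented edge set, presented through the two sides of every edge. -/
structure TreeData (G V E : Type*) [Group G] [MulAction G V] [MulAction G E] where
  src : E → V
  tgt : E → V
  half : E → Set V
  src_smul : ∀ (g : G) e, src (g • e) = g • src e
  tgt_smul : ∀ (g : G) e, tgt (g • e) = g • tgt e
  half_smul : ∀ (g : G) e v, g • v ∈ half (g • e) ↔ v ∈ half e
  src_mem : ∀ e, src e ∈ half e
  tgt_not_mem : ∀ e, tgt e ∉ half e
  cross : ∀ e f, f ≠ e → (src f ∈ half e ↔ tgt f ∈ half e)
  conn : ∀ P : V → Prop, (∀ e, P (src e) ↔ P (tgt e)) → ∀ u v, P u → P v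

namespace TreeData

variable {G V E : Type*} [Group G] [MulAction G V] [MulAction G E] (T : TreeData G V E)

/-- origin of a dart -/
def o (d : E × Bool) : V := if d.2 then T.src d.1 else T.tgt d.1
/-- end of a dart -/
def t (d : E × Bool) : V := if d.2 then T.tgt d.1 else T.src d.1
/-- far side of a dart -/
def H (d : E × Bool) : Set V := if d.2 then (T.half d.1)ᶜ else T.half d.1
/-- reversed dart -/
def rev (d : E × Bool) : E × Bool := (d.1, !d.2)
/-- translate of a dart -/
def dsmul (g : G) (d : E × Bool) : E × Bool := (g • d.1, d.2)

theorem o_rev (d : E × Bool) : T.o (rev d) = T.t d := by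
  rcases d with ⟨e, _ | _⟩ <;> simp [o, t, rev]
theorem t_rev (d : E × Bool) : T.t (rev d) = T.o d := by
  rcases d with ⟨e, _ | _⟩ <;> simp [o, t, rev]
theorem H_rev (d : E × Bool) : T.H (rev d) = (T.H d)ᶜ := by
  rcases d with ⟨e, _ | _⟩ <;> simp [H, rev]
theorem rev_rev (d : E × Bool) : rev (rev d) = d := by
  rcases d with ⟨e, _ | _⟩ <;> simp [rev]
theorem eq_or_rev {d f : E × Bool} (h : f.1 = d.1) : f = d ∨ f = rev d := by
  rcases d with ⟨e, _ | _⟩ <;> rcases f with ⟨e', _ | _⟩ <;> simp_all [rev]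
theorem o_dsmul (g : G) (d : E × Bool) : T.o (dsmul g d) = g • T.o d := by
  rcases d with ⟨e, _ | _⟩ <;> simp [o, dsmul, T.src_smul, T.tgt_smul]
theorem t_dsmul (g : G) (d : E × Bool) : T.t (dsmul g d) = g • T.t d := by
  rcases d with ⟨e, _ | _⟩ <;> simp [t, dsmul, T.src_smul, T.tgt_smul]
theorem H_dsmul (g : G) (d : E × Bool) (v : V) : g • v ∈ T.H (dsmul g d) ↔ v ∈ T.H d := by
  rcases d with ⟨e, _ | _⟩ <;> simp [H, dsmul, T.half_smul]
theorem rev_dsmul (g : G) (d : E × Bool) : rev (dsmul g d) = dsmul g (rev d) := rfl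
theorem dsmul_dsmul (g h : G) (d : E × Bool) : dsmul g (dsmul h d) = dsmul (g * h) d := by
  simp [dsmul, mul_smul]
theorem o_not_mem (d : E × Bool) : T.o d ∉ T.H d := by
  rcases d with ⟨e, _ | _⟩ <;> simp [o, H, T.src_mem, T.tgt_not_mem]
theorem t_mem (d : E × Bool) : T.t d ∈ T.H d := by
  rcases d with ⟨e, _ | _⟩ <;> simp [t, H, T.src_mem, T.tgt_not_mem]
theorem dcross {d f : E × Bool} (h : f.1 ≠ d.1) : T.o f ∈ T.H d ↔ T.t f ∈ T.H d := by
  have := T.cross d.1 f.1 h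
  rcases d with ⟨e, _ | _⟩ <;> rcases f with ⟨e', _ | _⟩ <;> simp [o, t, H] at * <;> tauto

theorem dconn (P : V → Prop) (h : ∀ d, P (T.o d) → P (T.t d)) (u v : V) (hu : P u) : P v := by
  refine T.conn P (fun e => ⟨fun hh => ?_, fun hh => ?_⟩) u v hu
  · simpa [o, t] using h (e, true) (by simpa [o] using hh)
  · simpa [o, t] using h (e, false) (by simpa [o] using hh)

theorem half_ind (d : E × Bool) (P : V → Prop) (h0 : P (T.t d))
    (hs : ∀ f, f.1 ≠ d.1 → T.o f ∈ T.H d → T.t f ∈ T.H d → P (T.o f) → P (T.t f))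
    (w : V) (hw : w ∈ T.H d) : P w := by
  refine T.dconn (fun w => w ∈ T.H d → P w) (fun f hf ht => ?_) (T.t d) w (fun _ => h0) hw
  by_cases hfd : f.1 = d.1
  · rcases eq_or_rev hfd with rfl | rfl
    · exact h0
    · rw [t_rev] at ht; exact absurd ht (T.o_not_mem d)
  · have := (T.dcross hfd).2 ht
    exact hs f hfd this ht (hf this)

/-- a dart pointing away inside: its far side is contained -/
theorem sub_of_step {d d3 : E × Bool} (h1 : T.o d ∉ T.H d3) (h2 : T.o d3 ∈ T.H d) (h3 : d3 ≠ rev d) :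
    T.H d3 ⊆ T.H d := by
  have hne : d3.1 ≠ d.1 := by
    intro h
    rcases eq_or_rev h with rfl | rfl
    · exact T.o_not_mem _ h2
    · exact h3 rfl
  intro w hw
  refine T.half_ind d3 (fun w => w ∈ T.H d) ((T.dcross hne).1 h2) (fun f hf hof htf hP => ?_) w hw
  by_cases hfd : f.1 = d.1
  · rcases eq_or_rev hfd with rfl | rfl
    · exact T.t_mem _
    · rw [t_rev] at htf; exact absurd htf h1
  · exact (T.dcross hfd).1 hP

theorem disj {d d' : E × Bool} (ho : T.o d = T.o d') (hne : d ≠ d') {y : V} (h : y ∈ T.H d)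
    (h' : y ∈ T.H d') : False := by
  have h1 : T.o (rev d') ∈ T.H d' := by rw [o_rev]; exact T.t_mem _
  have hE : d.1 ≠ d'.1 := by
    intro hh
    rcases eq_or_rev hh with rfl | rfl
    · exact hne rfl
    · rw [o_rev] at ho; exact T.o_not_mem d' (ho ▸ T.t_mem d')
  have : T.H d ⊆ T.H (rev d') := by
    apply T.sub_of_step
    · rw [o_rev]
      intro hh
      exact T.o_not_mem d (by rw [ho]; exact (T.dcross (f := d') (Ne.symm hE)).2 hh)
    · rw [H_rev, ho]; exact T.o_not_mem d'
    · rw [rev_rev]; exact hne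
  have := this h
  rw [H_rev] at this
  exact this h'

theorem exists_first {x y : V} (h : y ≠ x) : ∃ d, T.o d = x ∧ y ∈ T.H d := by
  have := T.dconn (fun y => y = x ∨ ∃ d, T.o d = x ∧ y ∈ T.H d) (fun f hf => ?_) x y (Or.inl rfl)
  · exact this.resolve_left h
  · rcases hf with hf | ⟨d, hd, hd'⟩
    · exact Or.inr ⟨f, hf, T.t_mem f⟩
    · by_cases hfd : f.1 = d.1
      · rcases eq_or_rev hfd with rfl | rfl
        · exact absurd hd' (T.o_not_mem _)
        · left; rw [t_rev, hd]
      · exact Or.inr ⟨d, hd, (T.dcross hfd).1 hd'⟩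

section potential
variable {K : Type*} [Group K]

/-- cochain on darts -/
def dm (m : E → K) (d : E × Bool) : K := if d.2 then m d.1 else (m d.1)⁻¹

theorem dm_rev (m : E → K) (d : E × Bool) : dm m (rev d) = (dm m d)⁻¹ := by
  rcases d with ⟨e, _ | _⟩ <;> simp [dm, rev]

/-- reduced paths starting with a dart, with the product of the cochain -/
inductive RP (m : E → K) : E × Bool → K → V → Prop
  | base (d : E × Bool) : RP m d (dm m d) (T.t d)
  | step (d d2 : E × Bool) (k : K) (x : V) (h : T.o d2 = T.t d) (h' : d2 ≠ rev d)
      (hr : RP m d2 k x) : RP m d (dm m d * k) x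

variable {T}

theorem RP.mem {m : E → K} {d k x} (h : T.RP m d k x) : x ∈ T.H d := by
  induction h with
  | base d => exact T.t_mem d
  | step d d2 k x h h' hr ih =>
    refine T.sub_of_step ?_ ?_ h' ih
    · intro hh
      exact T.disj (d := d2) (d' := rev d) (by rw [h, o_rev]) h' hh (by rw [H_rev]; exact T.o_not_mem d)
    · rw [h]; exact T.t_mem d

theorem RP.unique {m : E → K} {d k x} (h : T.RP m d k x) : ∀ {k'}, T.RP m d k' x → k = k' := by
  induction h with
  | base d =>
    intro k' h'
    generalize hx : T.t d = x at h'
    cases h' with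
    | base => rfl
    | step _ d2 k _ h h' hr =>
      have := hr.mem
      rw [← hx, ← h] at this
      exact absurd this (T.o_not_mem _)
  | step d d2 k x h h' hr ih =>
    intro k' h2
    cases h2 with
    | base => exact absurd (h ▸ hr.mem) (T.o_not_mem _)
    | step _ d3 k3 _ g g' gr =>
      have : d2 = d3 := by
        by_contra hne
        exact T.disj (by rw [h, g]) hne hr.mem gr.mem
      subst this
      rw [ih gr]

theorem RP.snoc {m : E → K} {d k x} (h : T.RP m d k x) (f : E × Bool) (hf : T.o f = x) :
    T.RP m d (k * dm m f) (T.t f) ∨ (T.t f = T.o d ∧ k * dm m f = 1) := by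
  induction h with
  | base d =>
    by_cases hh : f = rev d
    · right; subst hh; exact ⟨T.t_rev d, by rw [dm_rev]; simp⟩
    · left; exact RP.step d f _ _ hf hh (RP.base f)
  | step d d2 k x h h' hr ih =>
    left
    rcases ih hf with ih | ⟨i1, i2⟩
    · rw [mul_assoc]; exact RP.step d d2 _ _ h h' ih
    · rw [mul_assoc, i2, i1, h, mul_one]; exact RP.base d

theorem RP.exists {m : E → K} (x y : V) (h : y ≠ x) : ∃ d k, T.o d = x ∧ T.RP m d k y := by
  have := T.dconn (fun y => y = x ∨ ∃ d k, T.o d = x ∧ T.RP m d k y) (fun f hf => ?_) x y (Or.inl rfl)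
  · exact this.resolve_left h
  · rcases hf with hf | ⟨d, k, hd, hr⟩
    · exact Or.inr ⟨f, _, hf, RP.base f⟩
    · rcases hr.snoc f rfl with h1 | ⟨h1, h2⟩
      · exact Or.inr ⟨d, _, hd, h1⟩
      · left; rw [h1, hd]

variable (T)

theorem exists_potential (m : E → K) (r : V) :
    ∃ a : V → K, a r = 1 ∧ (∀ e, a (T.tgt e) = a (T.src e) * m e) ∧
      ∀ d k x, T.o d = r → T.RP m d k x → a x = k := by
  classical
  let A : V → K → Prop := fun v k => (v = r ∧ k = 1) ∨ ∃ d, T.o d = r ∧ T.RP m d k v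
  have hex : ∀ v, ∃ k, A v k := fun v => by
    by_cases h : v = r
    · exact ⟨1, Or.inl ⟨h, rfl⟩⟩
    · obtain ⟨d, k, hd, hr⟩ := RP.exists (T := T) (m := m) r v h
      exact ⟨k, Or.inr ⟨d, hd, hr⟩⟩
  have huniq : ∀ v k k', A v k → A v k' → k = k' := by
    rintro v k k' (⟨h, h1⟩ | ⟨d, hd, hr⟩) (⟨h', h1'⟩ | ⟨d', hd', hr'⟩)
    · rw [h1, h1']
    · subst h; subst hd'; exact absurd hr'.mem (T.o_not_mem _)
    · subst h'; subst hd; exact absurd hr.mem (T.o_not_mem _)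
    · have : d = d' := by
        by_contra hne
        exact T.disj (by rw [hd, hd']) hne hr.mem hr'.mem
      subst this; exact hr.unique hr'
  choose a ha using hex
  have hstep : ∀ f, a (T.t f) = a (T.o f) * dm m f := by
    intro f
    refine huniq _ _ _ (ha _) ?_
    rcases ha (T.o f) with ⟨h, h1⟩ | ⟨d, hd, hr⟩
    · rw [h1, one_mul]; exact Or.inr ⟨f, h, RP.base f⟩
    · rcases hr.snoc f rfl with h1 | ⟨h1, h2⟩
      · exact Or.inr ⟨d, hd, h1⟩
      · rw [h2]; exact Or.inl ⟨by rw [h1, hd], rfl⟩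
  refine ⟨a, huniq _ _ _ (ha r) (Or.inl ⟨rfl, rfl⟩), fun e => ?_, fun d k x hd hr => ?_⟩
  · simpa [o, t, dm] using hstep (e, true)
  · exact huniq _ _ _ (ha x) (Or.inr ⟨d, hd, hr⟩)

end potential

theorem conn_eq {K : Type*} (f : V → K) (h : ∀ e, f (T.src e) = f (T.tgt e)) (u v : V) : f u = f v :=
  T.conn (fun w => f u = f w) (fun e => by rw [h e]) u v rfl

/-- two potentials related by a transformation agree if they agree at one point -/
theorem equivariant_of (a : V → G) (m : E → G) (ha : ∀ e, a (T.tgt e) = a (T.src e) * m e)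
    (hm : ∀ (g : G) e, m (g • e) = g * m e * g⁻¹) (r : V) (g : G) (v : V) :
    a (g • v) = (a (g • r) * g * (a r)⁻¹) * a v * g⁻¹ := by
  have := T.conn_eq (fun v => a (g • v) * g * (a v)⁻¹) (fun e => ?_) v r
  · rw [← this]; group
  · rw [ha, ← T.tgt_smul, ← T.src_smul, ha, hm]; group

/-- the twisted endomorphism -/
def twist (a : V → G) (m : E → G) (ha : ∀ e, a (T.tgt e) = a (T.src e) * m e)
    (hm : ∀ (g : G) e, m (g • e) = g * m e * g⁻¹) (r : V) : G →* G :=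
  MonoidHom.mk' (fun g => a (g • r) * g * (a r)⁻¹) (fun g h => by
    rw [mul_smul, T.equivariant_of a m ha hm r g (h • r)]; group)

theorem twist_apply (a : V → G) (m : E → G) (ha : ∀ e, a (T.tgt e) = a (T.src e) * m e)
    (hm : ∀ (g : G) e, m (g • e) = g * m e * g⁻¹) (r : V) (g : G) :
    T.twist a m ha hm r g = a (g • r) * g * (a r)⁻¹ := rfl

/-- Injectivity of twists without folding. -/
theorem twist_injective (a : V → G) (m : E → G) (ha : ∀ e, a (T.tgt e) = a (T.src e) * m e)
    (hm : ∀ (g : G) e, m (g • e) = g * m e * g⁻¹) (r : V)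
    (h0 : ∀ d, T.o d ≠ dm m d • T.t d)
    (h1 : ∀ c d f, T.o c = T.o d → T.o f = T.o c → dm m c • T.t c ∈ T.H f →
      dm m d • T.t d ∈ T.H f → c = d) :
    Function.Injective (T.twist a m ha hm r) := by
  have key : ∀ d k x, T.RP m d k x → ∀ f, T.o f = T.o d → dm m d • T.t d ∈ T.H f → k • x ∈ T.H f := by
    intro d k x h
    induction h with
    | base d => intro f _ h; exact h
    | step d d2 k x h h' hr ih =>
      intro f hf hmem
      obtain ⟨f2, hf2, hf2'⟩ := T.exists_first (Ne.symm (h0 d2))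
      have i := ih f2 hf2 hf2'
      rw [mul_smul]
      have i2 := (T.H_dsmul (dm m d) f2 _).2 i
      have hy : T.o (dsmul (dm m d) f2) = dm m d • T.t d := by rw [o_dsmul, hf2, h]
      have hx : T.o f ∉ T.H (dsmul (dm m d) f2) := by
        intro hh
        rw [← smul_inv_smul (dm m d) (T.o f), H_dsmul, hf] at hh
        have := h1 d2 (rev d) f2 (by rw [h, o_rev]) hf2 hf2' (by rw [dm_rev, t_rev]; exact hh)
        exact h' this
      refine T.sub_of_step hx (by rw [hy]; exact hmem) ?_ i2
      intro hh
      rw [hh, H_rev] at hx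
      exact hx (T.o_not_mem f)
  rw [injective_iff_map_eq_one]
  intro g hg
  obtain ⟨b, hb1, hb2, hb3⟩ := T.exists_potential m r
  have hab : ∀ v, a v = a r * b v := by
    intro v
    have := T.conn_eq (fun v => a v * (b v)⁻¹) (fun e => by rw [ha, hb2]; group) v r
    rw [hb1] at this
    rw [mul_inv_eq_iff_eq_mul] at this
    rw [this]; group
  rw [twist_apply, hab (g • r)] at hg
  have hg2 : b (g • r) * g = 1 := by
    have : a r * (b (g • r) * g) * (a r)⁻¹ = 1 := by rw [← hg]; group
    rwa [conj_eq_one_iff] at this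
  by_cases hgr : g • r = r
  · rw [hgr, hb1, one_mul] at hg2; exact hg2
  · exfalso
    obtain ⟨d, k, hd, hr⟩ := RP.exists (T := T) (m := m) r _ hgr
    have hk := hb3 d k _ hd hr
    obtain ⟨f, hf, hf'⟩ := T.exists_first (Ne.symm (h0 d))
    have := key d k _ hr f hf hf'
    rw [← hk, ← mul_smul, hg2, one_smul, ← hd, ← hf] at this
    exact T.o_not_mem f this

end TreeData

namespace TreeData

variable {G V E : Type*} [Group G] [MulAction G V] [MulAction G E] (T : TreeData G V E)

theorem pow_not_mem {e : E} {u : G} (hu : u • T.src e = T.tgt e) (n : ℕ) :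
    u ^ (n + 1) • T.src e ∉ T.half e := by
  induction n with
  | zero => simpa [hu] using T.tgt_not_mem e
  | succ n ih =>
    have hne : u ^ (n + 1) • e ≠ e := by
      intro h
      apply ih
      rw [← T.src_smul, h]; exact T.src_mem e
    have := T.cross e _ hne
    rw [T.src_smul, T.tgt_smul, ← hu, ← mul_smul, ← pow_succ] at this
    rwa [← this]

theorem inv_pow_mem {e : E} {u : G} (hu : u • T.src e = T.tgt e) (n : ℕ) :
    (u ^ n)⁻¹ • T.src e ∈ T.half e := by
  induction n with
  | zero => simpa using T.src_mem e
  | succ n ih =>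
    have hne : (u ^ (n + 1))⁻¹ • e ≠ e := by
      intro h
      apply T.pow_not_mem hu n
      rw [inv_smul_eq_iff] at h
      rw [← T.src_smul, ← h]; exact T.src_mem e
    have := T.cross e _ hne
    rw [T.src_smul, T.tgt_smul, ← hu, ← mul_smul] at this
    have h2 : (u ^ (n + 1))⁻¹ * u = (u ^ n)⁻¹ := by rw [pow_succ']; group
    rw [h2] at this
    rwa [this]

theorem pow_ne_one {e : E} {u : G} (hu : u • T.src e = T.tgt e) (n : ℕ) : u ^ (n + 1) ≠ 1 := by
  intro h
  apply T.pow_not_mem hu n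
  rw [h, one_smul]; exact T.src_mem e

theorem dm_dsmul {m : E → G} (hm : ∀ (g : G) e, m (g • e) = g * m e * g⁻¹) (g : G) (d : E × Bool) :
    dm m (dsmul g d) = g * dm m d * g⁻¹ := by
  rcases d with ⟨e, _ | _⟩ <;> simp [dm, dsmul, hm, mul_assoc]

/-- A translation normalizing an edge stabilizer contradicts co-Hopficity. -/
theorem not_bad (hco : CoHopfian G) (htr : ∀ e e' : E, ∃ g : G, g • e = e')
    (hfin : ∀ e : E, Finite (MulAction.stabilizer G e)) (e : E) (u : G)
    (hu : u • T.src e = T.tgt e)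
    (hn : u ∈ Subgroup.normalizer (MulAction.stabilizer G e : Set G)) : False := by
  classical
  have := hfin e
  obtain ⟨N, hN, hcomm⟩ : ∃ N : ℕ, 0 < N ∧ ∀ g : G, g • e = e → g * u ^ N = u ^ N * g := by
    have : Finite (MulAut (MulAction.stabilizer G e)) :=
      Finite.of_injective (fun f => (f : MulAction.stabilizer G e → MulAction.stabilizer G e))
        DFunLike.coe_injective
    let φ := (MulAction.stabilizer G e).normalizerMonoidHom
    let x : MulAut (MulAction.stabilizer G e) := φ ⟨u, hn⟩
    refine ⟨orderOf x, orderOf_pos x, fun g hg => ?_⟩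
    have h1 : x ^ orderOf x = 1 := pow_orderOf_eq_one x
    have h2 : φ (⟨u, hn⟩ ^ orderOf x) = 1 := by rw [map_pow]; exact h1
    have h3 := congrArg (fun f => ((f : MulAut (MulAction.stabilizer G e)) ⟨g, hg⟩ : G)) h2
    have h4 : u ^ orderOf x * g * (u ^ orderOf x)⁻¹ = g := h3
    rw [mul_inv_eq_iff_eq_mul] at h4
    exact h4.symm
  choose h hh using fun f => htr e f
  let m : E → G := fun f => h f * u ^ N * (h f)⁻¹
  have hme : ∀ g : G, m (g • e) = g * u ^ N * g⁻¹ := by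
    intro g
    have := hcomm ((h (g • e))⁻¹ * g) (by rw [mul_smul, inv_smul_eq_iff, hh])
    show h (g • e) * u ^ N * (h (g • e))⁻¹ = _
    rw [mul_inv_eq_iff_eq_mul]
    have h5 : h (g • e) * u ^ N = h (g • e) * (u ^ N * ((h (g • e))⁻¹ * g)) * g⁻¹ * h (g • e) := by group
    rw [h5, ← this]; group
  have hm : ∀ (g : G) f, m (g • f) = g * m f * g⁻¹ := by
    intro g f
    conv_lhs => rw [← hh f, ← mul_smul, hme]
    conv_rhs => rw [← hh f, hme]
    group
  obtain ⟨a, ha0, ha, -⟩ := T.exists_potential m (T.src e)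
  have hH : ∀ d, dm m d • T.t d ∈ T.H d := by
    intro d
    have hd : d = dsmul (h d.1) (e, d.2) := by simp [dsmul, hh]
    rw [hd, dm_dsmul hm, t_dsmul, ← mul_smul, inv_mul_cancel_right, mul_smul, H_dsmul]
    have he : m e = u ^ N := by simpa using hme 1
    rcases d.2 with _ | _
    · simpa [dm, H, t, he] using T.inv_pow_mem hu N
    · simpa [dm, H, t, he, ← hu, ← mul_smul, ← pow_succ] using T.pow_not_mem hu N
  have hinj := T.twist_injective a m ha hm (T.src e)
    (fun d hd => T.o_not_mem d (hd ▸ hH d))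
    (fun c d f h1 h2 h3 h4 => by
      have e1 : c = f := by
        by_contra hne
        exact T.disj h2.symm hne (hH c) h3
      have e2 : d = f := by
        by_contra hne
        exact T.disj (h1.symm.trans h2.symm) hne (hH d) h4
      rw [e1, e2])
  obtain ⟨g, hg⟩ := hco _ hinj u
  obtain ⟨b, hb0, hb, -⟩ := T.exists_potential (fun _ : E => Multiplicative.ofAdd (1 : ℤ)) (T.src e)
  have hbg : ∀ g : G, ∀ v, b (g • v) = b (g • T.src e) * b v := by
    intro g v
    have := T.conn_eq (fun v => b (g • v) * (b v)⁻¹) (fun f => by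
      rw [← T.tgt_smul, ← T.src_smul, hb, hb]; group) v (T.src e)
    simp only [hb0] at this
    rw [mul_inv_eq_iff_eq_mul] at this
    simpa using this
  let ε : G →* Multiplicative ℤ := MonoidHom.mk' (fun g => b (g • T.src e)) (fun g k => by
    rw [mul_smul, hbg])
  have hεu : ε u = Multiplicative.ofAdd 1 := by
    show b (u • T.src e) = _
    rw [hu, hb, hb0, one_mul]
  have hεa : ∀ v, ε (a v) = b v ^ N := by
    intro v
    have := T.conn_eq (fun v => ε (a v) * (b v ^ N)⁻¹) (fun f => by
      rw [ha, hb, map_mul]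
      have : ε (m f) = Multiplicative.ofAdd 1 ^ N := by
        show ε (h f * u ^ N * (h f)⁻¹) = _
        rw [map_mul, map_mul, map_pow, hεu, map_inv, mul_comm, inv_mul_cancel_left]
      rw [this, mul_pow, mul_inv, mul_mul_mul_comm, mul_inv_cancel, mul_one]) v (T.src e)
    simp only [hb0, ha0, map_one, one_pow, inv_one, mul_one] at this
    rwa [mul_inv_eq_one] at this
  have h6 := congrArg ε hg
  rw [twist_apply, map_mul, map_mul, hεa, ha0, inv_one, map_one, mul_one, hεu] at h6
  have h7 : ε g ^ (N + 1) = Multiplicative.ofAdd 1 := by rw [pow_succ]; exact h6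
  have h8 := congrArg Multiplicative.toAdd h7
  rw [toAdd_pow, toAdd_ofAdd] at h8
  have h9 : ((N : ℤ) + 1) ∣ 1 := ⟨Multiplicative.toAdd (ε g), by rw [nsmul_eq_mul] at h8; push_cast at h8; exact h8.symm⟩
  have := Int.le_of_dvd one_pos h9
  omega

theorem stab_o {d : E × Bool} {g : G} (h : g • d.1 = d.1) : g • T.o d = T.o d := by
  rw [← o_dsmul]; congr 1; exact Prod.ext h rfl
theorem stab_t {d : E × Bool} {g : G} (h : g • d.1 = d.1) : g • T.t d = T.t d := by
  rw [← t_dsmul]; congr 1; exact Prod.ext h rfl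

/-- single orbit twists are injective -/
theorem twist_injective_of_orbit (hco : CoHopfian G) (htr : ∀ e e' : E, ∃ g : G, g • e = e')
    (hfin : ∀ e : E, Finite (MulAction.stabilizer G e))
    (a : V → G) (m : E → G) (ha : ∀ e, a (T.tgt e) = a (T.src e) * m e)
    (hm : ∀ (g : G) e, m (g • e) = g * m e * g⁻¹) (r : V) :
    Function.Injective (T.twist a m ha hm r) := by
  have hcent : ∀ (g : G) e, g • e = e → g * m e = m e * g := by
    intro g e h
    have := hm g e
    rw [h] at this
    exact (mul_inv_eq_iff_eq_mul.1 this.symm)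
  have hcent' : ∀ (g : G) (d : E × Bool), g • d.1 = d.1 → g * dm m d = dm m d * g := by
    intro g d h
    have := hcent g d.1 h
    rcases d with ⟨e, _ | _⟩
    · simp only [dm, Bool.false_eq_true, if_false]
      exact ((show Commute g (m e) from this).inv_right).eq
    · simpa [dm] using this
  -- bad for darts
  have hbad : ∀ (d : E × Bool) (u : G), u • T.o d = T.t d →
      u ∈ Subgroup.normalizer (MulAction.stabilizer G d.1 : Set G) → False := by
    rintro ⟨e, _ | _⟩ u h1 h2
    · refine T.not_bad hco htr hfin e u⁻¹ ?_ (Subgroup.inv_mem _ h2)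
      rw [inv_smul_eq_iff]; simpa [o, t] using h1.symm
    · exact T.not_bad hco htr hfin e u (by simpa [o, t] using h1) h2
  have hnorm : ∀ (d : E × Bool), dm m d ∈ Subgroup.normalizer (MulAction.stabilizer G d.1 : Set G) := by
    intro d
    rw [Subgroup.mem_normalizer_iff]
    intro g
    constructor
    · intro hg
      have := hcent' g d hg
      rw [← this]; simpa using hg
    · intro hg
      have := hcent' _ d hg
      rw [mul_assoc, mul_assoc, inv_mul_cancel, mul_one] at this
      have h2 := mul_left_cancel this
      exact h2 ▸ hg
  have hcard : ∀ e f : E, Nat.card (MulAction.stabilizer G e) = Nat.card (MulAction.stabilizer G f) := by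
    intro e f
    obtain ⟨g, rfl⟩ := htr e f
    exact Nat.card_congr (MulAction.stabilizerEquivStabilizer (a := e) (b := g • e) rfl).toEquiv
  have h0 : ∀ d, T.o d ≠ dm m d • T.t d := by
    intro d hd
    exact hbad d (dm m d)⁻¹ (by rw [inv_smul_eq_iff]; exact hd) (Subgroup.inv_mem _ (hnorm d))
  have hst : ∀ c f, T.o f = T.o c → dm m c • T.t c ∈ T.H f →
      MulAction.stabilizer G c.1 = MulAction.stabilizer G f.1 := by
    intro c f hf hmem
    have := hfin f.1
    have hle : MulAction.stabilizer G c.1 ≤ MulAction.stabilizer G f.1 := by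
      intro g hg
      have hg' : g • c.1 = c.1 := hg
      have h1 : g • (dm m c • T.t c) = dm m c • T.t c := by
        rw [← mul_smul, hcent' g c hg', mul_smul, T.stab_t hg']
      have h2 : dm m c • T.t c ∈ T.H (dsmul g f) := by
        rw [← h1, H_dsmul]; exact hmem
      have h3 : f = dsmul g f := by
        by_contra hne
        exact T.disj (by rw [o_dsmul, hf, T.stab_o hg']) hne hmem h2
      exact (congrArg Prod.fst h3).symm
    exact SetLike.coe_injective (Set.eq_of_subset_of_ncard_le hle (hcard f.1 c.1).le (Set.toFinite _))
  refine T.twist_injective a m ha hm r h0 ?_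
  intro c d f hcd hfc hc hd
  have s1 := hst c f hfc hc
  have s2 := hst d f (hfc.trans hcd) hd
  obtain ⟨g, hg⟩ := htr c.1 d.1
  have hS : MulAction.stabilizer G c.1 = MulAction.stabilizer G d.1 := s1.trans s2.symm
  rcases eq_or_rev (d := dsmul g c) (f := d) hg.symm with h | h
  · -- same orientation: impossible unless g stabilizes
    -- g fixes the origin; compare the twisted ends
    have h1 : dm m d • T.t d ∈ T.H (dsmul g f) := by
      rw [h, dm_dsmul hm, t_dsmul, ← mul_smul, inv_mul_cancel_right, mul_smul, H_dsmul]
      exact hc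
    have h2 : f = dsmul g f := by
      by_contra hne
      refine T.disj ?_ hne hd h1
      rw [o_dsmul, hfc, ← o_dsmul, ← h, hcd]
    have h3 : g ∈ MulAction.stabilizer G f.1 := (congrArg Prod.fst h2).symm
    rw [← s1] at h3
    rw [h]
    have h4 : g • c.1 = c.1 := h3
    simp [dsmul, h4]
  · exfalso
    refine hbad c g⁻¹ ?_ ?_
    · rw [inv_smul_eq_iff, ← t_dsmul, ← o_rev, ← h, hcd]
    · apply Subgroup.inv_mem
      rw [Subgroup.mem_normalizer_iff]
      intro x
      conv_rhs => rw [hS]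
      rw [MulAction.mem_stabilizer_iff, MulAction.mem_stabilizer_iff, ← hg, mul_smul, inv_smul_smul,
        mul_smul, smul_left_cancel_iff]

end TreeData

namespace TreeData

variable {G V E : Type*} [Group G] [MulAction G V] [MulAction G E] (T : TreeData G V E)

/-- vertices not separated by the orbit of `e1` -/
def cset (e1 : E) : Setoid V where
  r v w := ∀ g : G, v ∈ T.half (g • e1) ↔ w ∈ T.half (g • e1)
  iseqv := ⟨fun _ _ => Iff.rfl, fun h g => (h g).symm, fun h h' g => (h g).trans (h' g)⟩

theorem half_smul' (g : G) (e : E) (v : V) : g • v ∈ T.half e ↔ v ∈ T.half (g⁻¹ • e) := by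
  rw [← T.half_smul g (g⁻¹ • e), smul_inv_smul]

/-- action on collapsed vertices -/
@[reducible] def cact (e1 : E) : MulAction G (Quotient (T.cset e1)) where
  smul g := Quotient.map (g • ·) (fun v w h k => by
    have := h (g⁻¹ * k)
    rw [mul_smul] at this
    simp only [half_smul']
    exact this)
  one_smul x := by
    induction x using Quotient.inductionOn with
    | h v => exact congrArg _ (one_smul G v)
  mul_smul g h x := by
    induction x using Quotient.inductionOn with
    | h v => exact congrArg _ (mul_smul g h v)

/-- collapse all edges outside of an orbit -/
def collapse (e1 : E) :
    letI := T.cact e1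
    TreeData G (Quotient (T.cset e1)) (MulAction.orbit G e1) :=
  letI := T.cact e1
  { src := fun e => Quotient.mk _ (T.src e.1)
    tgt := fun e => Quotient.mk _ (T.tgt e.1)
    half := fun e => {x | Quotient.lift (fun v => v ∈ T.half e.1) (fun v w h => by
      obtain ⟨g, hg⟩ := e.2
      have := h g
      simp only at hg
      rw [hg] at this
      exact propext this) x}
    src_smul := fun g e => congrArg _ (T.src_smul g e.1)
    tgt_smul := fun g e => congrArg _ (T.tgt_smul g e.1)
    half_smul := fun g e x => by
      induction x using Quotient.inductionOn with
      | h v => exact T.half_smul g e.1 v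
    src_mem := fun e => T.src_mem e.1
    tgt_not_mem := fun e => T.tgt_not_mem e.1
    cross := fun e f hne => T.cross e.1 f.1 (fun h => hne (Subtype.ext h))
    conn := fun P h u v hu => by
      induction u using Quotient.inductionOn with
      | h u =>
      induction v using Quotient.inductionOn with
      | h v =>
      refine T.conn (fun v => P (Quotient.mk _ v)) (fun e => ?_) u v hu
      by_cases he : e ∈ MulAction.orbit G e1
      · exact h ⟨e, he⟩
      · have : (Quotient.mk (T.cset e1) (T.src e)) = Quotient.mk (T.cset e1) (T.tgt e) := by
          apply Quotient.sound
          intro g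
          exact T.cross _ _ (fun hh => he ⟨g, hh.symm⟩)
        rw [this] }

theorem exists_twist_bijective (hco : CoHopfian G)
    (hfin : ∀ e : E, Finite (MulAction.stabilizer G e)) (e1 : E) (m : E → G)
    (hm : ∀ (g : G) e, m (g • e) = g * m e * g⁻¹) (h1 : ∀ e, e ∉ MulAction.orbit G e1 → m e = 1)
    (r : V) :
    ∃ (a : V → G) (ha : ∀ e, a (T.tgt e) = a (T.src e) * m e),
      Function.Bijective (T.twist a m ha hm r) := by
  letI := T.cact e1
  let T' := T.collapse e1
  obtain ⟨a', -, ha', -⟩ := T'.exists_potential (fun e => m e.1) (Quotient.mk _ r)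
  have ha : ∀ e, a' (Quotient.mk _ (T.tgt e)) = a' (Quotient.mk _ (T.src e)) * m e := by
    intro e
    by_cases he : e ∈ MulAction.orbit G e1
    · exact ha' ⟨e, he⟩
    · have : (Quotient.mk (T.cset e1) (T.src e)) = Quotient.mk (T.cset e1) (T.tgt e) := by
        apply Quotient.sound
        intro g
        exact T.cross _ _ (fun hh => he ⟨g, hh.symm⟩)
      rw [← this, h1 e he, mul_one]
  refine ⟨fun v => a' (Quotient.mk _ v), ha, ?_⟩
  have hinj := T'.twist_injective_of_orbit hco (fun e e' => by
      obtain ⟨g, hg⟩ := (show e'.1 ∈ MulAction.orbit G e.1 by rw [MulAction.orbit_eq_iff.2 e.2]; exact e'.2)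
      exact ⟨g, Subtype.ext hg⟩) (fun e => by
      have := hfin e.1
      refine Finite.of_injective (β := MulAction.stabilizer G e.1)
        (fun g => ⟨g.1, congrArg Subtype.val g.2⟩) (fun g h hgh => ?_)
      exact Subtype.ext (show g.1 = h.1 from congrArg (fun x : MulAction.stabilizer G e.1 => x.1) hgh)) a' (fun e => m e.1) ha'
      (fun g e => hm g e.1) (Quotient.mk _ r)
  exact ⟨hinj, hco _ hinj⟩

theorem bijective_of_equivariant [Nonempty V] (hco : CoHopfian G)
    (hfin : ∀ e : E, Finite (MulAction.stabilizer G e)) (A : Finset E)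
    (hA : ∀ e : E, ∃ e0 ∈ A, e ∈ MulAction.orbit G e0) : ∀ (n : ℕ) (θ : G →* G) (c : V → G),
    (∀ k v, c (k • v) = θ k * c v * k⁻¹) →
    ({e ∈ (A : Set E) | c (T.src e) ≠ c (T.tgt e)}).ncard = n → Function.Bijective θ := by
  classical
  intro n
  induction n using Nat.strong_induction_on with
  | _ n ih =>
  intro θ c hc hn
  have horb : ∀ e f, e ∈ MulAction.orbit G f → (c (T.src e) = c (T.tgt e) ↔ c (T.src f) = c (T.tgt f)) := by
    rintro _ f ⟨g, rfl⟩
    simp only [T.src_smul, T.tgt_smul, hc]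
    simp
  by_cases hall : ∀ e ∈ A, c (T.src e) = c (T.tgt e)
  · obtain ⟨r⟩ := ‹Nonempty V›
    have hconst := T.conn_eq c (fun e => by
      obtain ⟨e0, h0, h1⟩ := hA e
      exact (horb e e0 h1).2 (hall e0 h0))
    have hθ : ∀ k, θ k = c r * k * (c r)⁻¹ := by
      intro k
      have := hc k r
      rw [hconst (k • r) r] at this
      rw [eq_mul_inv_iff_mul_eq]
      rw [eq_mul_inv_iff_mul_eq] at this
      exact this.symm
    have : (θ : G → G) = MulAut.conj (c r) := by
      ext k; rw [hθ]; rfl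
    rw [this]; exact (MulAut.conj (c r)).bijective
  · push Not at hall
    obtain ⟨e1, he1, hne⟩ := hall
    obtain ⟨r⟩ := ‹Nonempty V›
    let m : E → G := fun e => if e ∈ MulAction.orbit G e1 then (c (T.src e))⁻¹ * c (T.tgt e) else 1
    have hm : ∀ (g : G) e, m (g • e) = g * m e * g⁻¹ := by
      intro g e
      have : g • e ∈ MulAction.orbit G e1 ↔ e ∈ MulAction.orbit G e1 :=
        ⟨fun h => by rwa [← MulAction.orbit_eq_iff, MulAction.orbit_smul, MulAction.orbit_eq_iff] at h,
          fun h => by rwa [← MulAction.orbit_eq_iff, MulAction.orbit_smul, MulAction.orbit_eq_iff]⟩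
      simp only [m, this]
      split_ifs
      · rw [T.src_smul, T.tgt_smul, hc, hc]; group
      · group
    obtain ⟨a, ha, hbij⟩ := T.exists_twist_bijective hco hfin e1 m hm (fun e he => if_neg he) r
    set α := T.twist a m ha hm r with hα
    have haeq : ∀ k v, a (k • v) = α k * a v * k⁻¹ := fun k v => T.equivariant_of a m ha hm r k v
    let αe : G ≃* G := MulEquiv.ofBijective α hbij
    have hαs : ∀ x, αe.symm (α x) = x := fun x => αe.symm_apply_apply x
    have hb : Function.Bijective ((αe.symm : G →* G).comp θ) := by
      refine ih _ ?_ ((αe.symm : G →* G).comp θ) (fun v => αe.symm (c v * (a v)⁻¹)) ?_ rfl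
      · rw [← hn]
        apply Set.ncard_lt_ncard _ ((Finset.finite_toSet A).subset (Set.sep_subset _ _))
        have hkey : ∀ e, αe.symm (c (T.src e) * (a (T.src e))⁻¹) ≠ αe.symm (c (T.tgt e) * (a (T.tgt e))⁻¹) →
            c (T.src e) ≠ c (T.tgt e) ∧ e ∉ MulAction.orbit G e1 := by
          intro e he
          by_cases h : e ∈ MulAction.orbit G e1
          · exfalso
            apply he
            rw [ha]
            simp only [m, if_pos h]
            congr 1; group
          · refine ⟨fun hh => he ?_, h⟩
            rw [ha]
            simp only [m, if_neg h, hh, mul_one]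
        refine ⟨fun e he => ⟨he.1, (hkey e he.2).1⟩, fun hsub => ?_⟩
        exact (hkey e1 (hsub ⟨he1, hne⟩).2).2 (MulAction.mem_orbit_self e1)
      · intro k v
        have : c (k • v) * (a (k • v))⁻¹ = θ k * (c v * (a v)⁻¹) * α k⁻¹ := by
          rw [hc, haeq, map_inv]; group
        rw [this, map_mul, map_mul, hαs]; rfl
    have : (θ : G → G) = αe ∘ ((αe.symm : G →* G).comp θ) := by
      ext x; simp
    rw [this]
    exact αe.bijective.comp hb

theorem rigid_of_tree [Nonempty V] (T : TreeData G V E) (hco : CoHopfian G)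
    (hfin : ∀ e : V, Finite (MulAction.stabilizer G e)) (A : Finset E)
    (hA : ∀ e : E, ∃ e0 ∈ A, e ∈ MulAction.orbit G e0) : Rigid G := by
  intro θ hθ
  have hfinE : ∀ e : E, Finite (MulAction.stabilizer G e) := by
    intro e
    have := hfin (T.src e)
    refine Finite.of_injective (β := MulAction.stabilizer G (T.src e)) (fun g => ⟨g.1, ?_⟩) ?_
    · have : g.1 • e = e := g.2
      rw [MulAction.mem_stabilizer_iff, ← T.src_smul, this]
    · intro g h hgh
      exact Subtype.ext (by simpa using hgh)
  have h1 : ∀ v : V, ∃ g : G, ∀ h ∈ MulAction.stabilizer G v, θ h * g = g * h := by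
    intro v
    have := hfin v
    obtain ⟨g, hg⟩ := hθ (MulAction.stabilizer G v) (Set.toFinite _)
    refine ⟨g⁻¹, fun h hh => ?_⟩
    have := hg h hh
    rw [MonoidHom.id_apply] at this
    conv_rhs => rw [this]
    group
  choose g hg using h1
  let ρ : V → V := fun v => Quotient.out (Quotient.mk (MulAction.orbitRel G V) v)
  have hρ : ∀ v, ∃ k : G, k • ρ v = v := by
    intro v
    have : (MulAction.orbitRel G V).r v (ρ v) := by
      apply Quotient.exact
      exact (Quotient.out_eq _).symm
    exact this
  have hρ2 : ∀ (k : G) v, ρ (k • v) = ρ v := by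
    intro k v
    apply congrArg Quotient.out
    apply Quotient.sound
    exact ⟨k, rfl⟩
  choose k hk using hρ
  refine T.bijective_of_equivariant hco hfinE A hA _ θ (fun v => θ (k v) * g (ρ v) * (k v)⁻¹) ?_ rfl
  intro x v
  have hs : (k v)⁻¹ * x⁻¹ * k (x • v) ∈ MulAction.stabilizer G (ρ v) := by
    rw [MulAction.mem_stabilizer_iff, mul_smul, mul_smul, ← hρ2 x v, hk, inv_smul_smul, inv_smul_eq_iff,
      hρ2, hk]
  have := hg (ρ v) _ hs
  rw [hρ2]
  have e1 : θ (k (x • v)) = θ x * θ (k v) * θ ((k v)⁻¹ * x⁻¹ * k (x • v)) := by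
    rw [← map_mul, ← map_mul]; congr 1; group
  rw [e1, mul_assoc _ (θ ((k v)⁻¹ * x⁻¹ * k (x • v))) (g (ρ v)), this]
  group

/-- separating edges -/
def Sep (x y : V) : Set E := {e | ¬ (x ∈ T.half e ↔ y ∈ T.half e)}

theorem mem_Sep (x y : V) (d : E × Bool) : d.1 ∈ T.Sep x y ↔ ¬ (x ∈ T.H d ↔ y ∈ T.H d) := by
  rcases d with ⟨e, _ | _⟩ <;> simp [Sep, H] <;> tauto

theorem Sep_finite (x y : V) : (T.Sep x y).Finite := by
  refine T.dconn (fun y => (T.Sep x y).Finite) (fun f hf => ?_) x y (by simp [Sep])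
  refine (hf.insert f.1).subset fun e he => ?_
  by_cases h : e = f.1
  · exact Or.inl h
  · right
    have := T.dcross (f := f) (d := (e, true)) (Ne.symm h)
    rw [show e = ((e, true) : E × Bool).1 from rfl, mem_Sep] at he ⊢
    rwa [this]

theorem Sep_smul (g : G) (x y : V) : (T.Sep (g • x) (g • y)).ncard = (T.Sep x y).ncard := by
  have : T.Sep (g • x) (g • y) = (fun e => g • e) '' T.Sep x y := by
    ext e
    constructor
    · intro he
      refine ⟨g⁻¹ • e, ?_, smul_inv_smul g e⟩
      simpa [Sep, T.half_smul'] using he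
    · rintro ⟨e, he, rfl⟩
      simpa [Sep, T.half_smul] using he
  rw [this, Set.ncard_image_of_injective _ (MulAction.injective g)]

theorem exists_fixed (T : TreeData G V E) (H : Subgroup G) (hH : (H : Set G).Finite) (v0 : V) :
    ∃ v : V, ∀ h ∈ H, h • v = v := by
  classical
  have : Finite H := hH
  have := Fintype.ofFinite H
  let ρ : V → ℕ := fun x => Finset.univ.sup (fun h : H => (T.Sep x (h.1 • v0)).ncard)
  obtain ⟨x, hx⟩ : ∃ x, ∀ y, ρ x ≤ ρ y := by
    obtain ⟨x, -, hx⟩ := WellFounded.has_min (InvImage.wf ρ wellFounded_lt) Set.univ ⟨v0, trivial⟩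
    exact ⟨x, fun y => not_lt.1 (hx y trivial)⟩
  have hinv : ∀ k ∈ H, ∀ y, ρ (k • y) ≤ ρ y := by
    intro k hk y
    apply Finset.sup_le
    intro h _
    have : (T.Sep (k • y) (h.1 • v0)).ncard = (T.Sep y (((⟨k, hk⟩ : H)⁻¹ * h).1 • v0)).ncard := by
      rw [← T.Sep_smul k y]
      simp [← mul_smul]
    rw [this]
    exact Finset.le_sup (f := fun h : H => (T.Sep y (h.1 • v0)).ncard) (Finset.mem_univ _)
  refine ⟨x, fun h hh => ?_⟩
  by_contra hne
  have hy := hinv h hh x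
  obtain ⟨d, hd, hyd⟩ := T.exists_first hne
  by_cases hyt : h • x = T.t d
  · have hpow : ∃ n, 0 < n ∧ h ^ n = 1 := by
      have := isOfFinOrder_of_finite (⟨h, hh⟩ : H)
      rw [isOfFinOrder_iff_pow_eq_one] at this
      obtain ⟨n, hn, hn1⟩ := this
      exact ⟨n, hn, by simpa using congrArg Subtype.val hn1⟩
    obtain ⟨n, hn, hn1⟩ := hpow
    obtain ⟨n, rfl⟩ : ∃ k, n = k + 1 := ⟨n - 1, by omega⟩
    rw [← hd] at hyt
    rcases d with ⟨e, _ | _⟩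
    · refine T.pow_ne_one (e := e) (u := h⁻¹) ?_ n (by rw [inv_pow, hn1, inv_one])
      rw [inv_smul_eq_iff]; simpa [o, t] using hyt.symm
    · exact T.pow_ne_one (e := e) (u := h) (by simpa [o, t] using hyt) n hn1
  · have hkey : ∀ s, T.Sep (T.t d) s ⊂ T.Sep x s ∨ T.Sep (T.t d) s ⊂ T.Sep (h • x) s := by
      intro s
      have hcr : ∀ f : E × Bool, f.1 ≠ d.1 → (x ∈ T.H f ↔ T.t d ∈ T.H f) := by
        intro f hf
        rw [← hd]; exact T.dcross (Ne.symm hf)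
      by_cases hs : s ∈ T.H d
      · left
        refine ⟨fun e he => ?_, fun hsub => ?_⟩
        · have hed : e ≠ d.1 := by
            rintro rfl
            rw [mem_Sep] at he
            exact he ⟨fun _ => hs, fun _ => T.t_mem d⟩
          rw [show e = ((e, true) : E × Bool).1 from rfl, mem_Sep] at he ⊢
          rwa [hcr _ hed]
        · have h1 : d.1 ∈ T.Sep x s := by
            rw [mem_Sep, ← hd]
            intro hh; exact T.o_not_mem d (hh.2 hs)
          have := hsub h1
          rw [mem_Sep] at this
          exact this ⟨fun _ => hs, fun _ => T.t_mem d⟩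
      · right
        refine ⟨fun e he => ?_, fun hsub => ?_⟩
        · by_cases hed : e = d.1
          · subst hed
            rw [mem_Sep]
            tauto
          · obtain ⟨f, rfl, hf⟩ : ∃ f : E × Bool, f.1 = e ∧ s ∈ T.H f := by
              by_cases hse : s ∈ T.half e
              · exact ⟨(e, false), rfl, by simpa [TreeData.H] using hse⟩
              · exact ⟨(e, true), rfl, by simpa [TreeData.H] using hse⟩
            rw [mem_Sep] at he ⊢
            have hx' : T.t d ∉ T.H f := by tauto
            have hx0 : x ∉ T.H f := by rwa [hcr f hed]
            have hP := T.half_ind f (fun w => w ∈ T.H d ↔ T.t f ∈ T.H d) Iff.rfl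
              (fun g hg hog htg hP => by
                by_cases hgd : g.1 = d.1
                · exfalso
                  rcases eq_or_rev hgd with rfl | rfl
                  · exact hx' htg
                  · rw [o_rev] at hog; exact hx' hog
                · rw [← T.dcross hgd]; exact hP)
            have hp1 := hP s hf
            intro hh
            have hp2 := hP (h • x) (by tauto)
            tauto
        · obtain ⟨d2, hd2, hyd2⟩ := T.exists_first hyt
          have hne2 : d2 ≠ rev d := by
            rintro rfl
            rw [H_rev] at hyd2; exact hyd2 hyd
          have hs2 : s ∉ T.H d2 := by
            intro hh
            exact T.disj (d := d2) (d' := rev d) (by rw [hd2, o_rev]) hne2 hh (by rw [H_rev]; exact hs)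
          have h1 : d2.1 ∈ T.Sep (h • x) s := by
            rw [mem_Sep]; tauto
          have := hsub h1
          rw [mem_Sep, ← hd2] at this
          have := T.o_not_mem d2
          tauto
    have hlt : ρ (T.t d) < ρ x := by
      obtain ⟨s, -, hs⟩ := Finset.exists_mem_eq_sup Finset.univ ⟨(1 : H), Finset.mem_univ _⟩
        (fun h : H => (T.Sep (T.t d) (h.1 • v0)).ncard)
      show Finset.univ.sup _ < _
      rw [hs]
      rcases hkey (s.1 • v0) with h1 | h1
      · refine (Set.ncard_lt_ncard h1 (T.Sep_finite _ _)).trans_le ?_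
        exact Finset.le_sup (f := fun h : H => (T.Sep x (h.1 • v0)).ncard) (Finset.mem_univ s)
      · refine (Set.ncard_lt_ncard h1 (T.Sep_finite _ _)).trans_le (le_trans ?_ hy)
        exact Finset.le_sup (f := fun k : H => (T.Sep (h • x) (k.1 • v0)).ncard) (Finset.mem_univ s)
    exact absurd (hx (T.t d)) (not_le.2 hlt)

theorem finite_conj [Nonempty V] (T : TreeData G V E)
    (hfin : ∀ v : V, Finite (MulAction.stabilizer G v)) (A : Finset V)
    (hA : ∀ v : V, ∃ v0 ∈ A, v ∈ MulAction.orbit G v0) :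
    ∃ B : Set G, B.Finite ∧ ∀ H : Subgroup G, (H : Set G).Finite → ∃ g : G, ∀ h ∈ H, g * h * g⁻¹ ∈ B := by
  refine ⟨⋃ v ∈ A, (MulAction.stabilizer G v : Set G), ?_, fun H hH => ?_⟩
  · apply Set.Finite.biUnion A.finite_toSet
    intro v _
    have := hfin v
    exact Set.toFinite _
  · obtain ⟨r⟩ := ‹Nonempty V›
    obtain ⟨v, hv⟩ := T.exists_fixed H hH r
    obtain ⟨v0, h0, g, hg⟩ := hA v
    refine ⟨g⁻¹, fun h hh => Set.mem_biUnion h0 ?_⟩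
    simp only at hg
    rw [SetLike.mem_coe, MulAction.mem_stabilizer_iff, inv_inv, mul_smul, mul_smul, hg, hv h hh, ← hg,
      inv_smul_smul]

end TreeData

section NestedFamily
open Pointwise

/-- A nested family of cuts of a group, with the finiteness conditions producing a tree. -/
structure NestedFamily (G : Type*) [Group G] (F : Set (Set G)) : Prop where
  smul_mem : ∀ (g : G), ∀ C ∈ F, g • C ∈ F
  compl_mem : ∀ C ∈ F, Cᶜ ∈ F
  nested : ∀ C ∈ F, ∀ D ∈ F, C ⊆ D ∨ C ⊆ Dᶜ ∨ Cᶜ ⊆ D ∨ D ⊆ C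
  nonempty : ∀ C ∈ F, C.Nonempty
  fin : ∀ x y : G, {C ∈ F | x ∈ C ∧ y ∉ C}.Finite
  orb : ∃ A : Set (Set G), A.Finite ∧ A ⊆ F ∧ ∀ C ∈ F, ∃ D ∈ A, ∃ g : G, g • D = C
  stab : ∀ K : Subgroup G, Infinite K → ∃ g ∈ K, ∃ C ∈ F, g • C ⊂ C

variable {G : Type*} [Group G] {F : Set (Set G)}

/-- midpoint vertex of a cut -/
def nfb (F : Set (Set G)) (U : Set G) : Set (Set G) := {W ∈ F | U ⊂ W ∨ Wᶜ ⊂ U}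
/-- origin vertex of a cut -/
def nfo (F : Set (Set G)) (U : Set G) : Set (Set G) := insert U (nfb F U)

theorem cpl_ss_cpl {A B : Set G} : Aᶜ ⊂ Bᶜ ↔ B ⊂ A := by
  simp only [ssubset_iff_subset_not_subset, Set.compl_subset_compl]
theorem ss_cpl_comm {A B : Set G} : A ⊂ Bᶜ ↔ B ⊂ Aᶜ := by
  conv_lhs => rw [← _root_.compl_compl A, cpl_ss_cpl]
theorem cpl_ss_comm {A B : Set G} : Aᶜ ⊂ B ↔ Bᶜ ⊂ A := by
  conv_lhs => rw [← _root_.compl_compl B, cpl_ss_cpl]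

theorem nfb_compl (U : Set G) : nfb F Uᶜ = nfb F U := by
  ext W
  simp only [nfb, Set.mem_ofPred_eq]
  rw [cpl_ss_cpl, cpl_ss_comm (A := U)]
  tauto

theorem compl_smul_set (g : G) (U : Set G) : (g • U)ᶜ = g • Uᶜ := (Set.smul_set_compl).symm

theorem ssubset_smul_iff (g : G) (U W : Set G) : g • U ⊂ g • W ↔ U ⊂ W := by
  simp only [ssubset_iff_subset_not_subset, Set.smul_set_subset_smul_set_iff]

theorem nfb_smul (hF : NestedFamily G F) (g : G) (U : Set G) : g • nfb F U = nfb F (g • U) := by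
  ext W
  rw [Set.mem_smul_set_iff_inv_smul_mem]
  simp only [nfb, Set.mem_ofPred_eq]
  have h1 : g⁻¹ • W ∈ F ↔ W ∈ F :=
    ⟨fun h => by simpa using hF.smul_mem g _ h, fun h => hF.smul_mem _ _ h⟩
  rw [h1, ← ssubset_smul_iff g U, ← ssubset_smul_iff g _ U, compl_smul_set, smul_inv_smul, smul_inv_smul]

theorem nfo_smul (hF : NestedFamily G F) (g : G) (U : Set G) : g • nfo F U = nfo F (g • U) := by
  rw [nfo, nfo, Set.smul_set_insert, nfb_smul hF]

theorem not_mem_nfb (hF : NestedFamily G F) {U : Set G} (hU : U ∈ F) : U ∉ nfb F U := by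
  rintro ⟨-, h | h⟩
  · exact (ssubset_irrefl U) h
  · obtain ⟨x, hx⟩ := hF.nonempty _ (hF.compl_mem U hU)
    exact hx (h.1 hx)

/-- vertices -/
def NFV (F : Set (Set G)) : Type _ := {v : Set (Set G) // ∃ U ∈ F, v = nfo F U ∨ v = nfb F U}

/-- action on vertices -/
@[reducible] def nfVact (hF : NestedFamily G F) : MulAction G (NFV F) where
  smul g v := ⟨g • v.1, by
    obtain ⟨U, hU, h | h⟩ := v.2
    · exact ⟨g • U, hF.smul_mem g U hU, Or.inl (by rw [h, nfo_smul hF])⟩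
    · exact ⟨g • U, hF.smul_mem g U hU, Or.inr (by rw [h, nfb_smul hF])⟩⟩
  one_smul v := Subtype.ext (one_smul G v.1)
  mul_smul g h v := Subtype.ext (mul_smul g h v.1)

/-- action on edges -/
@[reducible] def nfEact (hF : NestedFamily G F) : MulAction G F where
  smul g e := ⟨g • e.1, hF.smul_mem g e.1 e.2⟩
  one_smul v := Subtype.ext (one_smul G v.1)
  mul_smul g h v := Subtype.ext (mul_smul g h v.1)

theorem nf_adj_sub (hF : NestedFamily G F) {U W : Set G} (hU : U ∈ F) (hW : W ∈ F) (h : U ⊂ W)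
    (hb : ∀ X ∈ F, U ⊂ X → X ⊂ W → False) : nfo F Uᶜ ⊆ nfo F W := by
  rintro X (rfl | hX)
  · right
    exact ⟨hF.compl_mem U hU, Or.inr (by rwa [_root_.compl_compl])⟩
  · rw [nfb_compl] at hX
    obtain ⟨hXF, h1 | h1⟩ := hX
    · obtain ⟨x, hx⟩ := hF.nonempty U hU
      rcases hF.nested X hXF W hW with h2 | h2 | h2 | h2
      · rcases eq_or_ssubset_of_subset h2 with h3 | h3
        · exact Or.inl h3
        · exact (hb X hXF h1 h3).elim
      · exact (h2 (h1.1 hx) (h.1 hx)).elim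
      · rcases eq_or_ssubset_of_subset h2 with h3 | h3
        · rw [← h3] at h
          exact (h.1 hx (h1.1 hx)).elim
        · exact Or.inr ⟨hXF, Or.inr h3⟩
      · rcases eq_or_ssubset_of_subset h2 with h3 | h3
        · exact Or.inl h3.symm
        · exact Or.inr ⟨hXF, Or.inl h3⟩
    · exact Or.inr ⟨hXF, Or.inr (h1.trans h)⟩

theorem nf_adj (hF : NestedFamily G F) {U W : Set G} (hU : U ∈ F) (hW : W ∈ F) (h : U ⊂ W)
    (hb : ∀ X ∈ F, U ⊂ X → X ⊂ W → False) : nfo F Uᶜ = nfo F W := by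
  apply subset_antisymm (nf_adj_sub hF hU hW h hb)
  have := nf_adj_sub hF (hF.compl_mem W hW) (hF.compl_mem U hU) (cpl_ss_cpl.2 h)
    (fun X hX h1 h2 => hb Xᶜ (hF.compl_mem X hX) (ss_cpl_comm.1 h2) (cpl_ss_comm.1 h1))
  rwa [_root_.compl_compl] at this

theorem nf_conn (hF : NestedFamily G F) (P : Set (Set G) → Prop)
    (h : ∀ U ∈ F, (P (nfo F U) ↔ P (nfb F U))) {U W : Set G} (hU : U ∈ F) (hW : W ∈ F) :
    P (nfb F U) ↔ P (nfb F W) := by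
  have hfin : ∀ U ∈ F, ∀ W ∈ F, {X ∈ F | U ⊂ X ∧ X ⊂ W}.Finite := by
    intro U hU W hW
    obtain ⟨x, hx⟩ := hF.nonempty U hU
    obtain ⟨y, hy⟩ := hF.nonempty _ (hF.compl_mem W hW)
    exact (hF.fin x y).subset fun X hX => ⟨hX.1, hX.2.1.1 hx, fun hh => hy (hX.2.2.1 hh)⟩
  have key : ∀ n : ℕ, ∀ U ∈ F, ∀ W ∈ F, U ⊂ W → {X ∈ F | U ⊂ X ∧ X ⊂ W}.ncard = n →
      (P (nfb F U) ↔ P (nfb F W)) := by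
    intro n
    induction n using Nat.strong_induction_on with
    | _ n ih =>
    intro U hU W hW hUW hn
    by_cases hb : ∃ X ∈ F, U ⊂ X ∧ X ⊂ W
    · obtain ⟨X, hX, h1, h2⟩ := hb
      rw [ih _ ?_ U hU X hX h1 rfl, ih _ ?_ X hX W hW h2 rfl]
      · rw [← hn]
        apply Set.ncard_lt_ncard _ (hfin U hU W hW)
        exact ⟨fun Y hY => ⟨hY.1, h1.trans hY.2.1, hY.2.2⟩, fun hs =>
          ssubset_irrefl X (hs (show X ∈ {X ∈ F | U ⊂ X ∧ X ⊂ W} from ⟨hX, h1, h2⟩)).2.1⟩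
      · rw [← hn]
        apply Set.ncard_lt_ncard _ (hfin U hU W hW)
        exact ⟨fun Y hY => ⟨hY.1, hY.2.1, hY.2.2.trans h2⟩, fun hs =>
          ssubset_irrefl X (hs (show X ∈ {X ∈ F | U ⊂ X ∧ X ⊂ W} from ⟨hX, h1, h2⟩)).2.2⟩
    · push Not at hb
      rw [← h W hW, ← nf_adj hF hU hW hUW (fun X hX h1 h2 => hb X hX h1 h2), h _ (hF.compl_mem U hU),
        nfb_compl]
  have key2 : ∀ U ∈ F, ∀ W ∈ F, U ⊆ W → (P (nfb F U) ↔ P (nfb F W)) := by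
    intro U hU W hW hUW
    rcases eq_or_ssubset_of_subset hUW with rfl | h3
    · rfl
    · exact key _ U hU W hW h3 rfl
  rcases hF.nested U hU W hW with h2 | h2 | h2 | h2
  · exact key2 U hU W hW h2
  · rw [key2 U hU _ (hF.compl_mem W hW) h2, nfb_compl]
  · rw [← key2 _ (hF.compl_mem U hU) W hW h2, nfb_compl]
  · exact (key2 W hW U hU h2).symm

/-- the tree of a nested family -/
def nfTree (hF : NestedFamily G F) :
    letI := nfVact hF
    letI := nfEact hF
    TreeData G (NFV F) F :=
  letI := nfVact hF
  letI := nfEact hF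
  { src := fun e => ⟨nfo F e.1, e.1, e.2, Or.inl rfl⟩
    tgt := fun e => ⟨nfb F e.1, e.1, e.2, Or.inr rfl⟩
    half := fun e => {v | e.1 ∈ v.1}
    src_smul := fun g e => Subtype.ext (nfo_smul hF g e.1).symm
    tgt_smul := fun g e => Subtype.ext (nfb_smul hF g e.1).symm
    half_smul := fun g e v => Set.smul_mem_smul_set_iff
    src_mem := fun e => Set.mem_insert _ _
    tgt_not_mem := fun e => not_mem_nfb hF e.2
    cross := fun e f hne => by
      constructor
      · rintro (h | h)
        · exact absurd (Subtype.ext h.symm) hne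
        · exact h
      · intro h; exact Or.inr h
    conn := fun P h u v hu => by
      let Q : Set (Set G) → Prop := fun x => ∀ hx, P ⟨x, hx⟩
      have hQ : ∀ x : NFV F, Q x.1 ↔ P x := fun x => ⟨fun hh => hh x.2, fun hh _ => hh⟩
      have hQ2 : ∀ U ∈ F, (Q (nfo F U) ↔ Q (nfb F U)) := by
        intro U hU
        rw [hQ ⟨nfo F U, U, hU, Or.inl rfl⟩, hQ ⟨nfb F U, U, hU, Or.inr rfl⟩]
        exact h ⟨U, hU⟩
      rw [← hQ] at hu ⊢
      obtain ⟨U, hU, h1⟩ := u.2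
      obtain ⟨W, hW, h2⟩ := v.2
      have e1 : Q u.1 ↔ Q (nfb F U) := by
        rcases h1 with h1 | h1
        · rw [h1, hQ2 U hU]
        · rw [h1]
      have e2 : Q v.1 ↔ Q (nfb F W) := by
        rcases h2 with h1 | h1
        · rw [h1, hQ2 W hW]
        · rw [h1]
      rw [e2, ← nf_conn hF Q hQ2 hU hW, ← e1]
      exact hu }

theorem nf_stab_finite (hF : NestedFamily G F) (v : NFV F) :
    letI := nfVact hF
    Finite (MulAction.stabilizer G v) := by
  letI := nfVact hF
  letI := nfEact hF
  by_contra hinf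
  rw [not_finite_iff_infinite] at hinf
  obtain ⟨g, hg, C, hC, hgC⟩ := hF.stab _ hinf
  -- reduce to C ∈ v
  have hvm : ∀ (k : G), k • v = v → ∀ X, k • X ∈ v.1 ↔ X ∈ v.1 := by
    intro k hk X
    have h2 : k • v.1 = v.1 := congrArg Subtype.val hk
    conv_lhs => rw [← h2]
    exact Set.smul_mem_smul_set_iff
  have main : ∀ (g : G) (C : Set G), C ∈ F → g • v = v → g • C ⊂ C → C ∈ v.1 → False := by
    intro g C hC hg hgC hCv
    let T := nfTree hF
    have hpow : ∀ n : ℕ, g ^ (n + 1) • C ⊂ g ^ n • C := by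
      intro n
      rw [pow_succ, mul_smul, ssubset_smul_iff]; exact hgC
    have hanti : StrictAnti (fun n : ℕ => g ^ n • C) := strictAnti_nat_of_succ_lt hpow
    have hmem : ∀ n : ℕ, g ^ n • C ∈ F := fun n => hF.smul_mem _ _ hC
    have hinj : Function.Injective (fun n : ℕ => (⟨g ^ (n + 1) • C, hmem _⟩ : F)) := by
      intro a b hab
      have h3 := hanti.injective (congrArg Subtype.val hab)
      omega
    refine (Set.infinite_range_of_injective hinj) ((T.Sep_finite v (T.tgt ⟨C, hC⟩)).subset ?_)
    rintro _ ⟨n, rfl⟩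
    show ¬ ((g ^ (n + 1) • C) ∈ v.1 ↔ (g ^ (n + 1) • C) ∈ nfb F C)
    have hgn : g ^ (n + 1) • v = v :=
      (MulAction.stabilizer G v).pow_mem (show g ∈ MulAction.stabilizer G v from hg) (n + 1)
    rw [hvm _ hgn]
    intro hiff
    have hlt : g ^ (n + 1) • C ⊂ C := by
      have := hanti (Nat.succ_pos n)
      simpa using this
    obtain ⟨-, h4 | h4⟩ := hiff.1 hCv
    · exact ssubset_irrefl _ (h4.trans hlt)
    · obtain ⟨y, hy⟩ := hF.nonempty _ (hF.compl_mem C hC)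
      exact hy (h4.1 (fun hh => hy (hlt.1 hh)))
  by_cases h : C ∈ v.1
  · exact main g C hC hg hgC h
  · have hg' : g⁻¹ • v = v := inv_mem (show g ∈ MulAction.stabilizer G v from hg)
    have hgC' : C ⊂ g⁻¹ • C := by rw [← ssubset_smul_iff g, smul_inv_smul]; exact hgC
    let T := nfTree hF
    have hmono : StrictMono (fun n : ℕ => g⁻¹ ^ n • C) := strictMono_nat_of_lt_succ (fun n => by
      show g⁻¹ ^ n • C ⊂ g⁻¹ ^ (n + 1) • C
      rw [pow_succ, mul_smul, ssubset_smul_iff]; exact hgC')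
    have hmem : ∀ n : ℕ, g⁻¹ ^ n • C ∈ F := fun n => hF.smul_mem _ _ hC
    have hinj : Function.Injective (fun n : ℕ => (⟨g⁻¹ ^ (n + 1) • C, hmem _⟩ : F)) := by
      intro a b hab
      have h3 := hmono.injective (congrArg Subtype.val hab)
      omega
    refine (Set.infinite_range_of_injective hinj) ((T.Sep_finite v (T.tgt ⟨C, hC⟩)).subset ?_)
    rintro _ ⟨n, rfl⟩
    show ¬ ((g⁻¹ ^ (n + 1) • C) ∈ v.1 ↔ (g⁻¹ ^ (n + 1) • C) ∈ nfb F C)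
    have hgn : g⁻¹ ^ (n + 1) • v = v :=
      (MulAction.stabilizer G v).pow_mem (show g⁻¹ ∈ MulAction.stabilizer G v from hg') (n + 1)
    rw [hvm _ hgn]
    intro hiff
    have hlt : C ⊂ g⁻¹ ^ (n + 1) • C := by
      have := hmono (Nat.succ_pos n)
      simpa using this
    exact h (hiff.2 ⟨hmem _, Or.inl hlt⟩)

theorem nf_main (hF : NestedFamily G F) (hne : F.Nonempty) (hco : CoHopfian G) :
    Rigid G ∧ ∃ B : Set G, B.Finite ∧ ∀ H : Subgroup G, (H : Set G).Finite →
      ∃ g : G, ∀ h ∈ H, g * h * g⁻¹ ∈ B := by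
  classical
  letI := nfVact hF
  letI := nfEact hF
  obtain ⟨A, hAf, hAF, hA⟩ := hF.orb
  obtain ⟨U0, hU0⟩ := hne
  have : Nonempty (NFV F) := ⟨⟨nfo F U0, U0, hU0, Or.inl rfl⟩⟩
  constructor
  · have hf : {e : F | e.1 ∈ A}.Finite := hAf.preimage Subtype.val_injective.injOn
    refine (nfTree hF).rigid_of_tree hco (nf_stab_finite hF) hf.toFinset ?_
    intro e
    obtain ⟨D, hD, g, hg⟩ := hA e.1 e.2
    refine ⟨⟨D, hAF hD⟩, by simpa using hD, g, Subtype.ext hg⟩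
  · have hf : {v : NFV F | v.1 ∈ (nfo F) '' A ∪ (nfb F) '' A}.Finite :=
      ((hAf.image _).union (hAf.image _)).preimage Subtype.val_injective.injOn
    refine (nfTree hF).finite_conj (nf_stab_finite hF) hf.toFinset ?_
    rintro ⟨v, U, hU, hv⟩
    obtain ⟨D, hD, g, hg⟩ := hA U hU
    rcases hv with rfl | rfl
    · refine ⟨⟨nfo F D, D, hAF hD, Or.inl rfl⟩, ?_, g, Subtype.ext ?_⟩
      · refine hf.mem_toFinset.2 ?_
        exact Or.inl ⟨D, hD, rfl⟩
      · show g • nfo F D = nfo F U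
        rw [nfo_smul hF, hg]
    · refine ⟨⟨nfb F D, D, hAF hD, Or.inr rfl⟩, ?_, g, Subtype.ext ?_⟩
      · refine hf.mem_toFinset.2 ?_
        exact Or.inr ⟨D, hD, rfl⟩
      · show g • nfb F D = nfb F U
        rw [nfb_smul hF, hg]

end NestedFamily

section FP
variable {G : Type*} [Group G]

theorem finite_of_fg_free {α : Type*} (h : Group.FG (FreeGroup α)) : Finite α := by
  classical
  obtain ⟨S, hS⟩ := (Group.fg_iff' (G := FreeGroup α)).1 h |>.imp fun n h => h
  obtain ⟨S, -, hS⟩ := hS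
  by_contra hinf
  rw [not_finite_iff_infinite] at hinf
  let A : Finset α := S.biUnion fun w => (w.toWord.map Prod.fst).toFinset
  obtain ⟨x, hx⟩ := Infinite.exists_notMem_finset A
  let φ : FreeGroup α →* Multiplicative ℤ :=
    FreeGroup.lift (fun y => if y = x then Multiplicative.ofAdd 1 else 1)
  have hφ : φ = 1 := by
    apply MonoidHom.eq_of_eqOn_dense hS
    intro w hw
    have : ∀ L : List (α × Bool), (∀ p ∈ L, p.1 ≠ x) → φ (FreeGroup.mk L) = 1 := by
      intro L hL
      rw [FreeGroup.lift_mk]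
      apply List.prod_eq_one
      intro y hy
      obtain ⟨p, hp, rfl⟩ := List.mem_map.1 hy
      simp [hL p hp]
    rw [← FreeGroup.mk_toWord (x := w)]
    apply this
    intro p hp hpx
    apply hx
    simp only [A, Finset.mem_biUnion, List.mem_toFinset, List.mem_map]
    exact ⟨w, hw, p, hp, hpx⟩
  have h1 : φ (FreeGroup.of x) = Multiplicative.ofAdd 1 := by simp [φ]
  rw [hφ] at h1
  have := congrArg Multiplicative.toAdd h1
  simp at this

theorem vf_setup (hfg : Group.FG G) (hvf : VirtuallyFree G) :
    ∃ K : Subgroup G, K.Normal ∧ K.FiniteIndex ∧ ∃ n, Nonempty (FreeGroupBasis (Fin n) K) := by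
  obtain ⟨H, hH, ⟨hfree⟩⟩ := hvf
  have : Group.FG H.normalCore := inferInstance
  have hf2 : IsFreeGroup H.normalCore :=
    IsFreeGroup.ofMulEquiv (Subgroup.subgroupOfEquivOfLe H.normalCore_le)
  have b := IsFreeGroup.basis H.normalCore
  have : Finite (IsFreeGroup.Generators H.normalCore) := by
    apply finite_of_fg_free
    exact Group.fg_of_surjective (f := b.repr.toMonoidHom) b.repr.surjective
  obtain ⟨n, ⟨e⟩⟩ := Finite.exists_equiv_fin (IsFreeGroup.Generators H.normalCore)
  exact ⟨H.normalCore, inferInstance, inferInstance, n, ⟨b.reindex e⟩⟩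

theorem fp_of_basis (K : Subgroup G) [K.Normal] [K.FiniteIndex] {n : ℕ}
    (b : FreeGroupBasis (Fin n) K) : Group.IsFinitelyPresented G := by
  classical
  let Q := G ⧸ K
  let Y := Fin n ⊕ Q
  let σ : Q → G := Quotient.out
  have hσ : ∀ q : Q, (σ q : Q) = q := fun q => Quotient.out_eq _
  let j : K →* FreeGroup Y := (FreeGroup.map Sum.inl).comp b.repr.toMonoidHom
  let s : Y → G := Sum.elim (fun i => (b i : G)) σ
  let L : FreeGroup Y →* G := FreeGroup.lift s
  have hLj : ∀ f : K, L (j f) = f := by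
    have : L.comp j = K.subtype := by
      apply b.ext_hom
      intro i
      simp [j, L, s]
    intro f; exact DFunLike.congr_fun this f
  have hc1 : ∀ (q : Q) (x : K), σ q * x * (σ q)⁻¹ ∈ K := fun q x => Subgroup.Normal.conj_mem ‹_› _ x.2 _
  have hc2 : ∀ (q q' : Q), σ q * σ q' * (σ (q * q'))⁻¹ ∈ K := by
    intro q q'
    rw [← QuotientGroup.eq_one_iff]
    rw [QuotientGroup.mk_mul, QuotientGroup.mk_mul, QuotientGroup.mk_inv, hσ, hσ, hσ, mul_inv_cancel]
  let τ : Q → FreeGroup Y := fun q => FreeGroup.of (Sum.inr q)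
  let r1 : Q × Fin n → FreeGroup Y := fun p =>
    τ p.1 * j (b p.2) * (τ p.1)⁻¹ * (j ⟨_, hc1 p.1 (b p.2)⟩)⁻¹
  let r2 : Q × Q → FreeGroup Y := fun p =>
    τ p.1 * τ p.2 * (j ⟨_, hc2 p.1 p.2⟩ * τ (p.1 * p.2))⁻¹
  let R : Set (FreeGroup Y) := Set.range r1 ∪ Set.range r2
  have : Finite Q := inferInstance
  have hR : R.Finite := (Set.finite_range _).union (Set.finite_range _)
  have hRf : Finite R := hR
  have hLτ : ∀ q, L (τ q) = σ q := by intro q; simp [L, τ, s]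
  have hLR : ∀ r ∈ R, L r = 1 := by
    rintro _ (⟨p, rfl⟩ | ⟨p, rfl⟩)
    · simp only [r1, map_mul, map_inv, hLτ, hLj, mul_inv_cancel]
    · simp only [r2, map_mul, map_inv, hLτ, hLj]
      group
  let π : FreeGroup Y →* PresentedGroup R := PresentedGroup.mk R
  have hπ : ∀ r ∈ R, π r = 1 := fun r hr => PresentedGroup.one_of_mem hr
  have e1 : ∀ (q : Q) (f : K), π (τ q) * π (j f) * (π (τ q))⁻¹ = π (j ⟨_, hc1 q f⟩) := by
    intro q
    let c : K →* K := MonoidHom.mk' (fun f => ⟨_, hc1 q f⟩) (fun f g => by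
      apply Subtype.ext; simp)
    have : ((MulAut.conj (π (τ q))).toMonoidHom.comp (π.comp j)) = (π.comp j).comp c := by
      apply b.ext_hom
      intro i
      have := hπ _ (Or.inl ⟨(q, i), rfl⟩)
      simp only [r1, map_mul, map_inv] at this
      rw [mul_inv_eq_one] at this
      exact this
    intro f
    exact DFunLike.congr_fun this f
  have e2 : ∀ q q', π (τ q) * π (τ q') = π (j ⟨_, hc2 q q'⟩) * π (τ (q * q')) := by
    intro q q'
    have := hπ _ (Or.inr ⟨(q, q'), rfl⟩)
    simp only [r2, map_mul, map_inv] at this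
    rwa [mul_inv_eq_one] at this
  have hg : ∀ g : G, g * (σ (g : Q))⁻¹ ∈ K := by
    intro g
    rw [← QuotientGroup.eq_one_iff, QuotientGroup.mk_mul, QuotientGroup.mk_inv, hσ, mul_inv_cancel]
  let φ : G →* PresentedGroup R := MonoidHom.mk' (fun g => π (j ⟨_, hg g⟩) * π (τ (g : Q))) (by
    intro g g'
    have h1 : (⟨_, hg (g * g')⟩ : K) = ⟨_, hg g⟩ * ⟨_, hc1 (g : Q) ⟨_, hg g'⟩⟩ *
        ⟨_, hc2 (g : Q) (g' : Q)⟩ := by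
      apply Subtype.ext
      simp only [Subgroup.coe_mul, QuotientGroup.mk_mul]
      group
    rw [h1, map_mul, map_mul, map_mul, map_mul, ← e1]
    have := e2 (g : Q) (g' : Q)
    rw [QuotientGroup.mk_mul, mul_assoc _ _ (π (τ (↑g * ↑g'))), ← this]
    group)
  have hφj : ∀ f : K, φ f = π (j f) := by
    intro f
    have h0 : ((f : G) : Q) = 1 := (QuotientGroup.eq_one_iff _).2 f.2
    have h1 : π (τ 1) = π (j ⟨_, hc2 1 1⟩) := by
      have h3 := e2 1 1
      have h4 : π (τ (1 * 1)) = π (τ 1) := by rw [mul_one]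
      rw [h4] at h3
      exact mul_right_cancel h3
    show π (j ⟨_, hg f⟩) * π (τ ((f : G) : Q)) = _
    have h2 : π (τ ((f : G) : Q)) = π (j ⟨_, hc2 1 1⟩) := by rw [h0, h1]
    rw [h2, ← map_mul, ← map_mul]
    congr 2
    apply Subtype.ext
    simp only [Subgroup.coe_mul, h0, mul_one]
    group
  have hφσ : ∀ q, φ (σ q) = π (τ q) := by
    intro q
    show π (j ⟨_, hg (σ q)⟩) * π (τ ((σ q : G) : Q)) = _
    have h1 : (⟨_, hg (σ q)⟩ : K) = 1 := by
      apply Subtype.ext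
      simp [hσ]
    rw [h1, map_one, map_one, one_mul, hσ]
  have hφL : φ.comp L = π := by
    apply FreeGroup.ext_hom
    rintro (i | q)
    · simp only [MonoidHom.comp_apply]
      have : L (FreeGroup.of (Sum.inl i)) = (b i : K) := by simp [L, s]
      rw [this, hφj]
      congr 1
      simp [j]
    · simp only [MonoidHom.comp_apply]
      rw [show FreeGroup.of (Sum.inr q) = τ q from rfl, hLτ, hφσ]
  have hker : L.ker = Subgroup.normalClosure R := by
    apply le_antisymm
    · intro w hw
      have : π w = 1 := by rw [← hφL, MonoidHom.comp_apply, hw, map_one]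
      exact (QuotientGroup.eq_one_iff _).1 this
    · exact Subgroup.normalClosure_le_normal (fun r hr => hLR r hr)
  have hsurj : Function.Surjective L := by
    intro g
    refine ⟨j ⟨_, hg g⟩ * τ (g : Q), ?_⟩
    rw [map_mul, hLj, hLτ]; simp
  exact Group.IsFinitelyPresented.of_surjective L hsurj ⟨R, hR, hker.symm⟩

/-- universal property of a presentation -/
theorem exists_hom_of_rel {H : Type*} [Group H] {n : ℕ} {φ : FreeGroup (Fin n) →* G}
    (hs : Function.Surjective φ) {R : Set (FreeGroup (Fin n))} (hR : Subgroup.normalClosure R = φ.ker)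
    (ψ : FreeGroup (Fin n) →* H) (h : ∀ r ∈ R, ψ r = 1) : ∃ θ : G →* H, ∀ w, θ (φ w) = ψ w := by
  have hk : φ.ker ≤ ψ.ker := by
    rw [← hR]; exact Subgroup.normalClosure_le_normal h
  refine ⟨φ.liftOfSurjective hs ⟨ψ, hk⟩, fun w => ?_⟩
  exact MonoidHom.liftOfRightInverse_comp_apply _ _ _ ⟨ψ, hk⟩ w

end FP

section AI
open Pointwise Filter

variable {G : Type*} [Group G]

/-- coboundary in direction `b` -/
def dl (b : G) (C : Set G) : Set G := {x | ¬ (x ∈ C ↔ x * b ∈ C)}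
/-- almost invariant sets -/
def AI (C : Set G) : Prop := ∀ b : G, (dl b C).Finite
/-- size of the coboundary -/
noncomputable def nb (b : G) (C : Set G) : ℕ := (dl b C).ncard

theorem mem_dl {b : G} {C : Set G} {x : G} : x ∈ dl b C ↔ ¬ (x ∈ C ↔ x * b ∈ C) := Iff.rfl

theorem dl_smul (b g : G) (C : Set G) : dl b (g • C) = g • dl b C := by
  ext x
  rw [Set.mem_smul_set_iff_inv_smul_mem, mem_dl, mem_dl, Set.mem_smul_set_iff_inv_smul_mem,
    Set.mem_smul_set_iff_inv_smul_mem, smul_eq_mul, smul_eq_mul, mul_assoc]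

theorem dl_compl (b : G) (C : Set G) : dl b Cᶜ = dl b C := by
  ext x
  simp only [mem_dl, Set.mem_compl_iff]
  tauto

theorem dl_inter_sub (b : G) (C D : Set G) : dl b (C ∩ D) ⊆ dl b C ∪ dl b D := by
  intro x
  simp only [mem_dl, Set.mem_inter_iff, Set.mem_union]
  tauto

theorem AI.smul {C : Set G} (h : AI C) (g : G) : AI (g • C) := fun b => by
  rw [dl_smul]; exact (h b).smul_set
theorem AI.compl {C : Set G} (h : AI C) : AI Cᶜ := fun b => by
  rw [dl_compl]; exact h b
theorem AI.inter {C D : Set G} (h : AI C) (h' : AI D) : AI (C ∩ D) := fun b =>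
  ((h b).union (h' b)).subset (dl_inter_sub b C D)
theorem AI.union {C D : Set G} (h : AI C) (h' : AI D) : AI (C ∪ D) := by
  have := (h.compl.inter h'.compl).compl
  rwa [← Set.compl_union, _root_.compl_compl] at this

theorem nb_smul (b g : G) (C : Set G) : nb b (g • C) = nb b C := by
  rw [nb, nb, dl_smul, Set.ncard_smul_set]
theorem nb_compl (b : G) (C : Set G) : nb b Cᶜ = nb b C := by rw [nb, nb, dl_compl]

theorem nb_submod {C D : Set G} (hC : AI C) (hD : AI D) (b : G) :
    nb b (C ∩ D) + nb b (C ∪ D) ≤ nb b C + nb b D := by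
  unfold nb
  rw [← Set.ncard_union_add_ncard_inter _ _ ((hC.inter hD) b) ((hC.union hD) b),
    ← Set.ncard_union_add_ncard_inter _ _ (hC b) (hD b)]
  apply add_le_add
  · apply Set.ncard_le_ncard _ ((hC b).union (hD b))
    intro x
    simp only [mem_dl, Set.mem_inter_iff, Set.mem_union]
    tauto
  · apply Set.ncard_le_ncard _ ((hC b).inter_of_left _)
    intro x
    simp only [mem_dl, Set.mem_inter_iff, Set.mem_union]
    tauto

theorem nb_submod_strict {C D : Set G} (hC : AI C) (hD : AI D) {x y : G} (hx : x ∈ C \ D)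
    (hy : y ∈ D \ C) : nb (x⁻¹ * y) (C ∩ D) + nb (x⁻¹ * y) (C ∪ D) < nb (x⁻¹ * y) C + nb (x⁻¹ * y) D := by
  unfold nb
  set b := x⁻¹ * y with hb
  have hxb : x * b = y := by rw [hb]; group
  rw [← Set.ncard_union_add_ncard_inter _ _ ((hC.inter hD) b) ((hC.union hD) b),
    ← Set.ncard_union_add_ncard_inter _ _ (hC b) (hD b)]
  apply add_lt_add_of_le_of_lt
  · apply Set.ncard_le_ncard _ ((hC b).union (hD b))
    intro x
    simp only [mem_dl, Set.mem_inter_iff, Set.mem_union]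
    tauto
  · apply Set.ncard_lt_ncard _ ((hC b).inter_of_left _)
    refine ⟨?_, fun h => ?_⟩
    · intro x
      simp only [mem_dl, Set.mem_inter_iff, Set.mem_union]
      tauto
    · have h1 : x ∈ dl b C ∩ dl b D := by
        simp only [mem_dl, Set.mem_inter_iff, hxb]
        exact ⟨fun h => hy.2 (h.1 hx.1), fun h => hx.2 (h.2 hy.1)⟩
      have h2 := (h h1).1
      simp only [mem_dl, Set.mem_inter_iff, hxb] at h2
      exact h2 ⟨fun h => absurd h.2 hx.2, fun h => absurd h.1 hy.2⟩

variable {n : ℕ}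

/-- number of boundary edges -/
noncomputable def nn (s : Fin n → G) (C : Set G) : ℕ := ∑ i, nb (s i) C

/-- refined size -/
noncomputable def nu (β : ℕ → G) (s : Fin n → G) (C : Set G) : Lex (ℕ → ℕ) :=
  toLex (fun k => Nat.casesOn k (nn s C) (fun k => nb (β k) C))

theorem nu_smul (β : ℕ → G) (s : Fin n → G) (g : G) (C : Set G) : nu β s (g • C) = nu β s C := by
  simp only [nu, nn, nb_smul]
theorem nu_compl (β : ℕ → G) (s : Fin n → G) (C : Set G) : nu β s Cᶜ = nu β s C := by
  simp only [nu, nn, nb_compl]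

theorem nu_strict {β : ℕ → G} (hβ : Function.Surjective β) (s : Fin n → G) {C D : Set G}
    (hC : AI C) (hD : AI D) (h1 : (C \ D).Nonempty) (h2 : (D \ C).Nonempty) :
    nu β s (C ∩ D) + nu β s (C ∪ D) < nu β s C + nu β s D := by
  obtain ⟨x, hx⟩ := h1
  obtain ⟨y, hy⟩ := h2
  have key : ∀ A B : Set G, nu β s A + nu β s B =
      toLex ((fun k => Nat.casesOn k (nn s A) (fun k => nb (β k) A) : ℕ → ℕ) +
        (fun k => Nat.casesOn k (nn s B) (fun k => nb (β k) B) : ℕ → ℕ)) := fun _ _ => rfl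
  rw [key, key]
  apply Pi.toLex_strictMono
  rw [Pi.lt_def]
  refine ⟨?_, ?_⟩
  · rintro (_ | k)
    · show nn s _ + nn s _ ≤ nn s _ + nn s _
      simp only [nn, ← Finset.sum_add_distrib]
      exact Finset.sum_le_sum fun i _ => nb_submod hC hD _
    · exact nb_submod hC hD _
  · obtain ⟨k, hk⟩ := hβ (x⁻¹ * y)
    refine ⟨k + 1, ?_⟩
    show nb (β k) _ + nb (β k) _ < nb (β k) _ + nb (β k) _
    rw [hk]
    exact nb_submod_strict hC hD hx hy

theorem nn_le_of_nu_le {β : ℕ → G} {s : Fin n → G} {C D : Set G} (h : nu β s C ≤ nu β s D) :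
    nn s C ≤ nn s D := by
  rcases h.lt_or_eq with h | h
  · obtain ⟨i, hi, hi'⟩ := h
    rcases i with _ | i
    · exact hi'.le
    · exact (hi 0 (Nat.succ_pos i)).le
  · exact (congrFun (congrArg ofLex h) 0).le

theorem nu_le_of_nn_lt {β : ℕ → G} {s : Fin n → G} {C D : Set G} (h : nn s C < nn s D) :
    nu β s C < nu β s D := ⟨0, fun j hj => absurd hj (Nat.not_lt_zero j), h⟩

/-- ends -/
structure IsEnd (ξ : Set G → Prop) : Prop where
  compl : ∀ C, AI C → (ξ Cᶜ ↔ ¬ ξ C)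
  inter : ∀ C D, AI C → AI D → (ξ (C ∩ D) ↔ ξ C ∧ ξ D)

theorem IsEnd.union {ξ : Set G → Prop} (h : IsEnd ξ) {C D : Set G} (hC : AI C) (hD : AI D) :
    ξ (C ∪ D) ↔ ξ C ∨ ξ D := by
  have h1 := h.compl _ (hC.compl.inter hD.compl)
  rw [h.inter _ _ hC.compl hD.compl, h.compl _ hC, h.compl _ hD, ← Set.compl_union, _root_.compl_compl] at h1
  tauto

/-- the end of a ray -/
def ray (h g : G) (C : Set G) : Prop := ∀ᶠ n : ℕ in atTop, h * g ^ n ∈ C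

/-- infinite order -/
def InfOrd (g : G) : Prop := Function.Injective (fun n : ℕ => g ^ n)

theorem InfOrd.inv {g : G} (h : InfOrd g) : InfOrd g⁻¹ := by
  intro a b hab
  simp only [inv_pow, inv_inj] at hab
  exact h hab

theorem ev_not_mem {g : G} (hg : InfOrd g) (h : G) {D : Set G} (hD : D.Finite) :
    ∀ᶠ n : ℕ in atTop, h * g ^ n ∉ D := by
  have hinj : Function.Injective (fun n : ℕ => h * g ^ n) := fun a b hab => hg (mul_left_cancel hab)
  have : {n : ℕ | h * g ^ n ∈ D}.Finite := hD.preimage hinj.injOn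
  rw [← Nat.cofinite_eq_atTop]
  exact (this.eventually_cofinite_notMem)

theorem ray_mul {g : G} (hg : InfOrd g) (h b : G) {C : Set G} (hC : AI C) :
    (∀ᶠ n : ℕ in atTop, h * g ^ n * b ∈ C) ↔ ray h g C := by
  have := ev_not_mem hg h (hC b)
  apply eventually_congr
  filter_upwards [this] with n hn
  rw [mem_dl, not_not] at hn
  exact hn.symm

theorem ray_dich {g : G} (hg : InfOrd g) (h : G) {C : Set G} (hC : AI C) :
    ray h g C ∨ ∀ᶠ n : ℕ in atTop, h * g ^ n ∉ C := by
  obtain ⟨N, hN⟩ := eventually_atTop.1 (ev_not_mem hg h (hC g))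
  have hstep : ∀ n ≥ N, (h * g ^ n ∈ C ↔ h * g ^ N ∈ C) := by
    intro n hn
    induction n, hn using Nat.le_induction with
    | base => rfl
    | succ n hn ih =>
      have := hN n hn
      rw [mem_dl, not_not, mul_assoc, ← pow_succ] at this
      rw [← this, ih]
  by_cases hc : h * g ^ N ∈ C
  · left; exact eventually_atTop.2 ⟨N, fun n hn => (hstep n hn).2 hc⟩
  · right; exact eventually_atTop.2 ⟨N, fun n hn hh => hc ((hstep n hn).1 hh)⟩

theorem ray_isEnd {g : G} (hg : InfOrd g) (h : G) : IsEnd (ray h g) where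
  compl C hC := by
    constructor
    · intro h1 h2
      obtain ⟨n, hn, hn'⟩ := (h1.and h2).exists
      exact hn hn'
    · intro h1
      exact (ray_dich hg h hC).resolve_left h1
  inter C D _ _ := eventually_and

theorem ray_smul (k h g : G) (C : Set G) : ray (k * h) g (k • C) ↔ ray h g C := by
  apply eventually_congr
  filter_upwards with n
  rw [Set.mem_smul_set_iff_inv_smul_mem, smul_eq_mul, mul_assoc, inv_mul_cancel_left]

/-- separation -/
def sep (h g : G) (C : Set G) : Prop := ¬ (ray h g C ↔ ray h g⁻¹ C)

theorem sep_smul (k h g : G) (C : Set G) : sep (k * h) g (k • C) ↔ sep h g C := by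
  simp only [sep, ray_smul]

/-- optimal cuts -/
def Opt (β : ℕ → G) (s : Fin n → G) : Set (Set G) :=
  {C | ∃ h g, InfOrd g ∧ AI C ∧ sep h g C ∧ ∀ D, AI D → sep h g D → nu β s C ≤ nu β s D}

theorem opt_nested {β : ℕ → G} (hβ : Function.Surjective β) (s : Fin n → G) (C D : Set G)
    (hC : C ∈ Opt β s) (hD : D ∈ Opt β s) : C ⊆ D ∨ C ⊆ Dᶜ ∨ Cᶜ ⊆ D ∨ D ⊆ C := by
  obtain ⟨h1, g1, hg1, aC, sC, mC⟩ := hC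
  obtain ⟨h2, g2, hg2, aD, sD, mD⟩ := hD
  by_contra hcon
  push Not at hcon
  obtain ⟨c1, c2, c3, c4⟩ := hcon
  have n1 : (C \ D).Nonempty := Set.sdiff_nonempty.2 c1
  have n2 : (C \ Dᶜ).Nonempty := Set.sdiff_nonempty.2 c2
  have n3 : (Cᶜ \ D).Nonempty := Set.sdiff_nonempty.2 c3
  have n4 : (D \ C).Nonempty := Set.sdiff_nonempty.2 c4
  have n3' : (Dᶜ \ C).Nonempty := by
    obtain ⟨x, hx, hx'⟩ := n3; exact ⟨x, hx', hx⟩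
  have S1 := nu_strict hβ s aC aD n1 n4
  have S2 := nu_strict hβ s aC aD.compl n2 n3'
  rw [nu_compl β s D] at S2
  have u1 : nu β s (C ∪ D) = nu β s (Cᶜ ∩ Dᶜ) := by
    rw [← Set.compl_union, nu_compl]
  have u2 : nu β s (C ∪ Dᶜ) = nu β s (Cᶜ ∩ D) := by
    rw [← nu_compl, Set.compl_union, _root_.compl_compl]
  rw [u1] at S1
  rw [u2] at S2
  -- ends
  have e1 := ray_isEnd hg1 h1
  have e1' := ray_isEnd hg1.inv h1
  have e2 := ray_isEnd hg2 h2
  have e2' := ray_isEnd hg2.inv h2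
  have aC' := aC.compl
  have aD' := aD.compl
  -- contradictions
  have lem : ∀ A B : Set G, nu β s A + nu β s B < nu β s C + nu β s D → AI A → AI B →
      sep h1 g1 A → sep h2 g2 B → False := fun A B h hA hB sA sB =>
    absurd (add_le_add (mC A hA sA) (mD B hB sB)) (not_le.2 h)
  have lem2 : ∀ A B : Set G, nu β s A + nu β s B < nu β s C + nu β s D → AI A → AI B →
      sep h1 g1 D → sep h2 g2 C → sep h1 g1 A → sep h1 g1 B → False := by
    intro A B h hA hB s1 s2 sA sB
    have hDC : nu β s D ≤ nu β s C := mD C aC s2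
    exact absurd (add_le_add (mC A hA sA) (hDC.trans (mC B hB sB))) (not_le.2 h)
  have A11 := lem _ _ S1 (aC.inter aD) (aC'.inter aD')
  have A11' := lem _ _ ((add_comm _ _).trans_lt S1) (aC'.inter aD') (aC.inter aD)
  have A10 := lem _ _ S2 (aC.inter aD') (aC'.inter aD)
  have A10' := lem _ _ ((add_comm _ _).trans_lt S2) (aC'.inter aD) (aC.inter aD')
  have B11 := lem2 _ _ S1 (aC.inter aD) (aC'.inter aD')
  have B10 := lem2 _ _ S2 (aC.inter aD') (aC'.inter aD)
  simp only [sep, e1.inter _ _ aC aD, e1.inter _ _ aC' aD, e1.inter _ _ aC aD', e1.inter _ _ aC' aD',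
    e1.compl _ aC, e1.compl _ aD, e1'.inter _ _ aC aD, e1'.inter _ _ aC' aD, e1'.inter _ _ aC aD',
    e1'.inter _ _ aC' aD', e1'.compl _ aC, e1'.compl _ aD,
    e2.inter _ _ aC aD, e2.inter _ _ aC' aD, e2.inter _ _ aC aD', e2.inter _ _ aC' aD',
    e2.compl _ aC, e2.compl _ aD, e2'.inter _ _ aC aD, e2'.inter _ _ aC' aD, e2'.inter _ _ aC aD',
    e2'.inter _ _ aC' aD', e2'.compl _ aC, e2'.compl _ aD] at *
  clear mC mD lem lem2 S1 S2 u1 u2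
  generalize ray h1 g1 C = p1 at *
  generalize ray h1 g1 D = p2 at *
  generalize ray h1 g1⁻¹ C = p3 at *
  generalize ray h1 g1⁻¹ D = p4 at *
  generalize ray h2 g2 C = p5 at *
  generalize ray h2 g2 D = p6 at *
  generalize ray h2 g2⁻¹ C = p7 at *
  generalize ray h2 g2⁻¹ D = p8 at *
  clear e1 e1' e2 e2'
  by_cases q1 : p1 <;> by_cases q2 : p2 <;> by_cases q3 : p3 <;> by_cases q4 : p4 <;>
  by_cases q5 : p5 <;> by_cases q6 : p6 <;> by_cases q7 : p7 <;> by_cases q8 : p8 <;>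
  simp only [q1, q2, q3, q4, q5, q6, q7, q8, and_true, and_false, not_true, not_false_iff, true_iff,
    iff_true, imp_false, forall_const] at *

end AI

section Split
open Pointwise Filter

variable {G : Type*} [Group G] {n : ℕ}

theorem AI_of_gen {φ : FreeGroup (Fin n) →* G} (hs : Function.Surjective φ) {C : Set G}
    (h : ∀ i, (dl (φ (FreeGroup.of i)) C).Finite) : AI C := by
  intro b
  obtain ⟨w, rfl⟩ := hs b
  have hinv : ∀ b : G, (dl b C).Finite → (dl b⁻¹ C).Finite := by
    intro b hb
    refine (hb.image (fun x => x * b)).subset ?_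
    intro x hx
    refine ⟨x * b⁻¹, ?_, by simp⟩
    rw [mem_dl] at hx ⊢
    rw [inv_mul_cancel_right]
    tauto
  induction w using FreeGroup.induction_on with
  | C1 => 
    rw [map_one]
    convert Set.finite_empty
    ext x; simp [mem_dl]
  | of i => exact h i
  | inv_of i _ => rw [map_inv]; exact hinv _ (h i)
  | mul x y hx hy =>
    rw [map_mul]
    refine (hx.union (hy.image (fun z => z * (φ x)⁻¹))).subset ?_
    intro z hz
    by_cases h1 : z ∈ dl (φ x) C
    · exact Or.inl h1
    · refine Or.inr ⟨z * φ x, ?_, by simp⟩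
      rw [mem_dl] at *
      rw [← mul_assoc] at hz
      tauto

theorem dl_ext {φ : FreeGroup (Fin n) →* G} {C C' : Set G}
    (h : ∀ i, dl (φ (FreeGroup.of i)) C = dl (φ (FreeGroup.of i)) C') (w : FreeGroup (Fin n)) :
    ∀ x, (x ∈ C ↔ x ∈ C') ↔ (x * φ w ∈ C ↔ x * φ w ∈ C') := by
  have h0 : ∀ i x, (x ∈ C ↔ x ∈ C') ↔ (x * φ (FreeGroup.of i) ∈ C ↔ x * φ (FreeGroup.of i) ∈ C') := by
    intro i x
    have := Set.ext_iff.1 (h i) x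
    rw [mem_dl, mem_dl] at this
    tauto
  induction w using FreeGroup.induction_on with
  | C1 => simp
  | of i => exact h0 i
  | inv_of i _ =>
    intro x
    have := h0 i (x * φ (FreeGroup.of i)⁻¹)
    rw [map_inv, inv_mul_cancel_right] at this
    rw [map_inv]
    exact this.symm
  | mul x y hx hy =>
    intro z
    rw [map_mul, ← mul_assoc, hx, hy]

/-- the skew permutation -/
def cp (φ : FreeGroup (Fin n) →* G) (c : Fin n → G → ZMod 2) (i : Fin n) :
    Equiv.Perm (G × ZMod 2) where
  toFun p := (p.1 * (φ (FreeGroup.of i))⁻¹, p.2 + c i (p.1 * (φ (FreeGroup.of i))⁻¹))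
  invFun p := (p.1 * φ (FreeGroup.of i), p.2 - c i p.1)
  left_inv p := by ext <;> simp
  right_inv p := by ext <;> simp

/-- the skew representation -/
def psi (φ : FreeGroup (Fin n) →* G) (c : Fin n → G → ZMod 2) :
    FreeGroup (Fin n) →* Equiv.Perm (G × ZMod 2) := FreeGroup.lift (cp φ c)

theorem psi_of (φ : FreeGroup (Fin n) →* G) (c : Fin n → G → ZMod 2) (i : Fin n) (x : G) (ε : ZMod 2) :
    psi φ c (FreeGroup.of i) (x, ε) =
      (x * (φ (FreeGroup.of i))⁻¹, ε + c i (x * (φ (FreeGroup.of i))⁻¹)) := by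
  rw [psi, FreeGroup.lift_apply_of]; rfl

theorem psi_of_inv (φ : FreeGroup (Fin n) →* G) (c : Fin n → G → ZMod 2) (i : Fin n) (x : G) (ε : ZMod 2) :
    psi φ c (FreeGroup.of i)⁻¹ (x, ε) = (x * (φ (FreeGroup.of i)), ε - c i x) := by
  rw [map_inv, psi, FreeGroup.lift_apply_of]; rfl

theorem psi_fst (φ : FreeGroup (Fin n) →* G) (c : Fin n → G → ZMod 2) (w : FreeGroup (Fin n)) :
    ∀ p, (psi φ c w p).1 = p.1 * (φ w)⁻¹ := by
  induction w using FreeGroup.induction_on with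
  | C1 => simp
  | of i => rintro ⟨x, ε⟩; rw [psi_of]
  | inv_of i _ => rintro ⟨x, ε⟩; rw [psi_of_inv, map_inv, inv_inv]
  | mul x y hx hy =>
    intro p
    rw [map_mul, map_mul, Equiv.Perm.mul_apply, hx, hy, mul_inv_rev, mul_assoc]

theorem psi_cob (φ : FreeGroup (Fin n) →* G) (χ : G → ZMod 2) (w : FreeGroup (Fin n)) :
    ∀ x ε, psi φ (fun i y => χ y + χ (y * φ (FreeGroup.of i))) w (x, ε) =
      (x * (φ w)⁻¹, ε + χ x + χ (x * (φ w)⁻¹)) := by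
  have h2 : ∀ a : ZMod 2, a + a = 0 := by decide
  induction w using FreeGroup.induction_on with
  | C1 =>
    intro x ε
    simp only [map_one, Equiv.Perm.one_apply, inv_one, mul_one, add_assoc, h2, add_zero]
  | of i =>
    intro x ε
    rw [psi_of]
    simp only [inv_mul_cancel_right, Prod.mk.injEq, true_and]
    ring
  | inv_of i _ =>
    intro x ε
    rw [psi_of_inv, map_inv, inv_inv]
    simp only [Prod.mk.injEq, true_and]
    have h3 : ∀ a b c : ZMod 2, a - (b + c) = a + b + c := by decide
    exact h3 _ _ _
  | mul u v hu hv =>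
    intro x ε
    rw [map_mul, Equiv.Perm.mul_apply, hv, hu, map_mul, mul_inv_rev, mul_assoc]
    have h3 : ∀ a b c d : ZMod 2, a + b + c + c + d = a + b + d := by decide
    rw [h3]

theorem psi_congr (φ : FreeGroup (Fin n) →* G) (c c' : Fin n → G → ZMod 2) (x : G) (ε : ZMod 2)
    (L : List (Fin n × Bool))
    (h : ∀ L', L' <:+ L → ∀ i, c i (x * (φ (FreeGroup.mk L'))⁻¹) = c' i (x * (φ (FreeGroup.mk L'))⁻¹)) :
    psi φ c (FreeGroup.mk L) (x, ε) = psi φ c' (FreeGroup.mk L) (x, ε) := by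
  induction L with
  | nil => rw [← FreeGroup.one_eq_mk, map_one, map_one]
  | cons a L ih =>
    have ih' := ih (fun L' hL' => h L' (hL'.trans (List.suffix_cons a L)))
    have hm : FreeGroup.mk (a :: L) = FreeGroup.mk [a] * FreeGroup.mk L := by
      rw [FreeGroup.mul_mk]; rfl
    have h1 := h (a :: L) List.suffix_rfl
    have h2 := h L (List.suffix_cons a L)
    rw [hm] at h1
    rw [hm, map_mul, map_mul, Equiv.Perm.mul_apply, Equiv.Perm.mul_apply, ih']
    have hf := psi_fst φ c' (FreeGroup.mk L) (x, ε)
    generalize psi φ c' (FreeGroup.mk L) (x, ε) = q at *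
    obtain ⟨y, δ⟩ := q
    obtain rfl : y = x * (φ (FreeGroup.mk L))⁻¹ := hf
    obtain ⟨i, b⟩ := a
    cases b
    · have : (FreeGroup.mk [(i, false)] : FreeGroup (Fin n)) = (FreeGroup.of i)⁻¹ := rfl
      rw [this, psi_of_inv, psi_of_inv, h2]
    · have : (FreeGroup.mk [(i, true)] : FreeGroup (Fin n)) = (FreeGroup.of i) := rfl
      rw [this, map_mul, mul_inv_rev, ← mul_assoc] at h1
      rw [this, psi_of, psi_of, h1]

theorem psi_zero (φ : FreeGroup (Fin n) →* G) (w : FreeGroup (Fin n)) (x : G) (ε : ZMod 2) :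
    psi φ (fun _ _ => 0) w (x, ε) = (x * (φ w)⁻¹, ε) := by
  have := psi_cob φ (fun _ => 0) w x ε
  simpa using this

theorem exists_split {φ : FreeGroup (Fin n) →* G} (hs : Function.Surjective φ)
    {R : Set (FreeGroup (Fin n))} (hRf : R.Finite) (hR : Subgroup.normalClosure R = φ.ker) :
    ∃ B : Set G, B.Finite ∧ ∀ C D1 D2 : Set G, (∀ i, dl (φ (FreeGroup.of i)) C ⊆ D1 ∪ D2) →
      (∀ x ∈ D1, ∀ y ∈ D2, x⁻¹ * y ∉ B) →
      ∃ C1 : Set G, ∀ i, dl (φ (FreeGroup.of i)) C1 = dl (φ (FreeGroup.of i)) C ∩ D1 := by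
  classical
  set P : FreeGroup (Fin n) → Set G := fun r =>
    (fun L' => (φ (FreeGroup.mk L'))⁻¹) '' {L' | L' <:+ r.toWord} with hP
  have hPf : ∀ r, (P r).Finite := by
    intro r
    apply Set.Finite.image
    exact (r.toWord.tails.finite_toSet).subset (fun L' hL' => by simpa using hL')
  refine ⟨⋃ r ∈ R, (P r)⁻¹ * P r, hRf.biUnion (fun r _ => (hPf r).inv.mul (hPf r)), ?_⟩
  intro C D1 D2 hD hB
  set χ : G → ZMod 2 := fun x => if x ∈ C then 1 else 0 with hχ
  set c' : Fin n → G → ZMod 2 := fun i y => χ y + χ (y * φ (FreeGroup.of i)) with hc'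
  have hc'0 : ∀ i y, c' i y ≠ 0 ↔ y ∈ dl (φ (FreeGroup.of i)) C := by
    intro i y
    simp only [hc', hχ, mem_dl]
    by_cases h1 : y ∈ C <;> by_cases h2 : y * φ (FreeGroup.of i) ∈ C <;> simp [h1, h2] <;> decide
  set c : Fin n → G → ZMod 2 := fun i y => if y ∈ D1 then c' i y else 0 with hc
  have hrel : ∀ r ∈ R, psi φ c r = 1 := by
    intro r hr
    have hr1 : φ r = 1 := by
      rw [← MonoidHom.mem_ker, ← hR]; exact Subgroup.subset_normalClosure hr
    ext1 ⟨x, ε⟩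
    rw [Equiv.Perm.one_apply]
    have hmk : FreeGroup.mk r.toWord = r := FreeGroup.mk_toWord
    by_cases hx : ∃ p ∈ P r, x * p ∈ D1
    · obtain ⟨p, hp, hpx⟩ := hx
      have h1 : psi φ c r (x, ε) = psi φ c' r (x, ε) := by
        rw [← hmk]
        apply psi_congr
        intro L' hL' i
        have hq : (φ (FreeGroup.mk L'))⁻¹ ∈ P r := ⟨L', hL', rfl⟩
        have hn : x * (φ (FreeGroup.mk L'))⁻¹ ∉ D2 := by
          intro h
          apply hB _ hpx _ h
          refine Set.mem_biUnion hr ?_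
          rw [show (x * p)⁻¹ * (x * (φ (FreeGroup.mk L'))⁻¹) = p⁻¹ * (φ (FreeGroup.mk L'))⁻¹ by group]
          exact Set.mul_mem_mul (Set.inv_mem_inv.2 hp) hq
        simp only [hc]
        split_ifs with hd
        · rfl
        · by_contra hne
          rcases hD i ((hc'0 i _).1 (Ne.symm hne)) with h | h
          · exact hd h
          · exact hn h
      rw [h1, hc', psi_cob, hr1, inv_one, mul_one]
      have h2 : ∀ a b : ZMod 2, a + b + b = a := by decide
      rw [h2]
    · push Not at hx
      have h1 : psi φ c r (x, ε) = psi φ (fun _ _ => 0) r (x, ε) := by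
        rw [← hmk]
        apply psi_congr
        intro L' hL' i
        have hq : (φ (FreeGroup.mk L'))⁻¹ ∈ P r := ⟨L', hL', rfl⟩
        simp only [hc, if_neg (hx _ hq)]
      rw [h1, psi_zero, hr1, inv_one, mul_one]
  obtain ⟨θ, hθ⟩ := exists_hom_of_rel hs hR (psi φ c) hrel
  have hfst : ∀ g, (θ g⁻¹ (1, 0)).1 = g := by
    intro g
    obtain ⟨w, hw⟩ := hs g⁻¹
    rw [← hw, hθ, psi_fst, hw, inv_inv, one_mul]
  refine ⟨{g | (θ g⁻¹ (1, 0)).2 = 1}, fun i => ?_⟩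
  ext g
  have hstep : (θ (g * φ (FreeGroup.of i))⁻¹ (1, 0)).2 = (θ g⁻¹ (1, 0)).2 - c i g := by
    rw [mul_inv_rev, map_mul, Equiv.Perm.mul_apply, ← map_inv, hθ]
    have := psi_of_inv φ c i (θ g⁻¹ (1, 0)).1 (θ g⁻¹ (1, 0)).2
    rw [Prod.mk.eta] at this
    rw [this, hfst]
  have hcg : c i g ≠ 0 ↔ g ∈ dl (φ (FreeGroup.of i)) C ∩ D1 := by
    simp only [hc, Set.mem_inter_iff]
    split_ifs with hd
    · rw [hc'0]; exact (and_iff_left hd).symm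
    · simp [hd]
  rw [← hcg, mem_dl]
  show ¬ ((θ g⁻¹ (1, 0)).2 = 1 ↔ (θ (g * φ (FreeGroup.of i))⁻¹ (1, 0)).2 = 1) ↔ _
  rw [hstep]
  have : ∀ a b : ZMod 2, ¬ (a = 1 ↔ a - b = 1) ↔ b ≠ 0 := by decide
  exact this _ _

end Split

section Orbits
open Pointwise Filter

variable {G : Type*} [Group G] {n : ℕ}

/-- minimal cuts -/
def MinCut (s : Fin n → G) (h g : G) (C : Set G) : Prop :=
  InfOrd g ∧ AI C ∧ sep h g C ∧ ∀ D, AI D → sep h g D → nn s C ≤ nn s D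

theorem nn_smul (s : Fin n → G) (g : G) (C : Set G) : nn s (g • C) = nn s C := by
  simp only [nn, nb_smul]

theorem MinCut.smul {s : Fin n → G} {h g : G} {C : Set G} (H : MinCut s h g C) (k : G) :
    MinCut s (k * h) g (k • C) := by
  obtain ⟨h1, h2, h3, h4⟩ := H
  refine ⟨h1, h2.smul k, (sep_smul k h g C).2 h3, fun D hD hD' => ?_⟩
  rw [nn_smul, ← nn_smul s k⁻¹ D]
  apply h4 _ (hD.smul _)
  rwa [← sep_smul k, smul_inv_smul]

/-- total boundary -/
def bd (s : Fin n → G) (C : Set G) : Set G := ⋃ i, dl (s i) C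

theorem bd_finite {s : Fin n → G} {C : Set G} (h : AI C) : (bd s C).Finite :=
  Set.finite_iUnion fun i => h (s i)

theorem bd_ncard {s : Fin n → G} {C : Set G} : (bd s C).ncard ≤ nn s C := by
  classical
  unfold bd nn nb
  have : ∀ t : Finset (Fin n), (⋃ i ∈ t, dl (s i) C).ncard ≤ ∑ i ∈ t, (dl (s i) C).ncard := by
    intro t
    induction t using Finset.induction_on with
    | empty => simp
    | insert a t ha ih =>
      rw [Finset.set_biUnion_insert, Finset.sum_insert ha]
      exact (Set.ncard_union_le _ _).trans (by gcongr)
  simpa using this Finset.univ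

theorem not_sep_triv {φ : FreeGroup (Fin n) →* G} (hs : Function.Surjective φ) {h g : G} {C : Set G}
    (hsep : sep h g C) : (bd (fun i => φ (FreeGroup.of i)) C).Nonempty := by
  by_contra hne
  rw [Set.not_nonempty_iff_eq_empty] at hne
  have h0 : ∀ i, dl (φ (FreeGroup.of i)) C = dl (φ (FreeGroup.of i)) ∅ := by
    intro i
    have h1 : dl (φ (FreeGroup.of i)) C ⊆ ∅ := by
      rw [← hne]; exact Set.subset_iUnion (fun i => dl (φ (FreeGroup.of i)) C) i
    rw [Set.subset_empty_iff.1 h1]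
    ext x; simp [mem_dl]
  have h1 : ∀ x, (x ∈ C ↔ (1:G) ∈ C) := by
    intro x
    obtain ⟨w, rfl⟩ := hs x
    have := dl_ext h0 w 1
    rw [one_mul] at this
    simp only [Set.mem_empty_iff_false, iff_false] at this
    tauto
  apply hsep
  unfold ray
  simp only [h1]

theorem sep_symm {h g : G} (hg : InfOrd g) {C C1 : Set G} (hC : AI C) (hC1 : AI C1) (hsep : sep h g C) :
    sep h g C1 ∨ sep h g ((C ∩ C1ᶜ) ∪ (Cᶜ ∩ C1)) := by
  have e1 := ray_isEnd hg h
  have e2 := ray_isEnd hg.inv h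
  simp only [sep, e1.union (hC.inter hC1.compl) (hC.compl.inter hC1),
    e2.union (hC.inter hC1.compl) (hC.compl.inter hC1), e1.inter _ _ hC hC1.compl,
    e1.inter _ _ hC.compl hC1, e2.inter _ _ hC hC1.compl,
    e2.inter _ _ hC.compl hC1, e1.compl _ hC, e1.compl _ hC1, e2.compl _ hC, e2.compl _ hC1] at *
  tauto

theorem nn_lt {s : Fin n → G} {C C1 : Set G} (hC : AI C) (h : ∀ i, dl (s i) C1 ⊆ dl (s i) C) {x : G}
    (hx : x ∈ bd s C) (hx1 : x ∉ bd s C1) : nn s C1 < nn s C := by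
  unfold nn nb
  obtain ⟨i, hi⟩ := Set.mem_iUnion.1 hx
  refine Finset.sum_lt_sum (fun j _ => Set.ncard_le_ncard (h j) (hC _)) ⟨i, Finset.mem_univ _, ?_⟩
  apply Set.ncard_lt_ncard _ (hC _)
  refine ⟨h i, fun hh => hx1 (Set.mem_iUnion.2 ⟨i, hh hi⟩)⟩

theorem min_connected {φ : FreeGroup (Fin n) →* G} (hs : Function.Surjective φ)
    {R : Set (FreeGroup (Fin n))} (hRf : R.Finite) (hR : Subgroup.normalClosure R = φ.ker) :
    ∃ B : Set G, B.Finite ∧ ∀ h g C, MinCut (fun i => φ (FreeGroup.of i)) h g C → ∀ D1 : Set G,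
      (bd (fun i => φ (FreeGroup.of i)) C ∩ D1).Nonempty →
      (bd (fun i => φ (FreeGroup.of i)) C \ D1).Nonempty →
      ∃ x ∈ bd (fun i => φ (FreeGroup.of i)) C ∩ D1, ∃ y ∈ bd (fun i => φ (FreeGroup.of i)) C \ D1,
        x⁻¹ * y ∈ B := by
  obtain ⟨B, hB, H⟩ := exists_split hs hRf hR
  refine ⟨B, hB, ?_⟩
  intro h g C hC D1 hn1 hn2
  by_contra hcon
  push Not at hcon
  obtain ⟨hg, aC, sC, mC⟩ := hC
  set s : Fin n → G := fun i => φ (FreeGroup.of i) with hsd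
  obtain ⟨C1, hC1⟩ := H C (bd s C ∩ D1) (bd s C \ D1) (fun i x hx => by
    have : x ∈ bd s C := Set.mem_iUnion.2 ⟨i, hx⟩
    by_cases h : x ∈ D1
    · exact Or.inl ⟨this, h⟩
    · exact Or.inr ⟨this, h⟩) hcon
  have hC1' : ∀ i x, x ∈ dl (s i) C1 ↔ x ∈ dl (s i) C ∧ x ∈ D1 := by
    intro i x
    rw [hC1 i]
    constructor
    · rintro ⟨h1, h2⟩; exact ⟨h1, h2.2⟩
    · rintro ⟨h1, h2⟩; exact ⟨h1, Set.mem_iUnion.2 ⟨i, h1⟩, h2⟩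
  have hC2 : ∀ i x, x ∈ dl (s i) ((C ∩ C1ᶜ) ∪ (Cᶜ ∩ C1)) ↔ x ∈ dl (s i) C ∧ x ∉ D1 := by
    intro i x
    have := hC1' i x
    simp only [mem_dl, Set.mem_union, Set.mem_inter_iff, Set.mem_compl_iff] at *
    tauto
  have aC1 : AI C1 := AI_of_gen hs (fun i => (aC _).subset (fun x hx => ((hC1' i x).1 hx).1))
  have aC2 : AI ((C ∩ C1ᶜ) ∪ (Cᶜ ∩ C1)) := (aC.inter aC1.compl).union (aC.compl.inter aC1)
  rcases sep_symm hg aC aC1 sC with h1 | h1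
  · have h2 := mC _ aC1 h1
    obtain ⟨x, hx⟩ := hn2
    refine absurd (nn_lt aC (fun i y hy => ((hC1' i y).1 hy).1) hx.1 ?_) (not_lt.2 h2)
    intro hx'
    obtain ⟨i, hi⟩ := Set.mem_iUnion.1 hx'
    exact hx.2 ((hC1' i x).1 hi).2
  · have h2 := mC _ aC2 h1
    obtain ⟨x, hx⟩ := hn1
    refine absurd (nn_lt aC (fun i y hy => ((hC2 i y).1 hy).1) hx.1 ?_) (not_lt.2 h2)
    intro hx'
    obtain ⟨i, hi⟩ := Set.mem_iUnion.1 hx'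
    exact ((hC2 i x).1 hi).2 hx.2

/-- iterated neighbourhoods -/
def nbhd (B : Set G) : ℕ → Set G
  | 0 => {1}
  | k + 1 => nbhd B k ∪ nbhd B k * B

theorem nbhd_finite {B : Set G} (hB : B.Finite) : ∀ k, (nbhd B k).Finite
  | 0 => Set.finite_singleton 1
  | k + 1 => (nbhd_finite hB k).union ((nbhd_finite hB k).mul hB)

theorem sub_nbhd {B D : Set G} (hD : D.Finite) (h1 : (1 : G) ∈ D)
    (hc : ∀ D1 : Set G, (D ∩ D1).Nonempty → (D \ D1).Nonempty →
      ∃ x ∈ D ∩ D1, ∃ y ∈ D \ D1, x⁻¹ * y ∈ B) {K : ℕ} (hK : D.ncard ≤ K) : D ⊆ nbhd B K := by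
  have mono : ∀ k, nbhd B k ⊆ nbhd B (k + 1) := fun k => Set.subset_union_left
  have h1k : ∀ k, (1 : G) ∈ nbhd B k := by
    intro k
    induction k with
    | zero => exact rfl
    | succ k ih => exact mono k ih
  have key : ∀ k, D ⊆ nbhd B k ∨ k + 1 ≤ (D ∩ nbhd B k).ncard := by
    intro k
    induction k with
    | zero =>
      right
      exact (Set.ncard_pos (hD.inter_of_left _)).2 ⟨1, h1, h1k 0⟩
    | succ k ih =>
      by_cases hsub : D ⊆ nbhd B k
      · exact Or.inl (hsub.trans (mono k))
      · right
        have h2 := ih.resolve_left hsub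
        obtain ⟨x, hx, y, hy, hxy⟩ := hc (nbhd B k) ⟨1, h1, h1k k⟩ (Set.sdiff_nonempty.2 hsub)
        have : D ∩ nbhd B k ⊂ D ∩ nbhd B (k + 1) := by
          refine ⟨Set.inter_subset_inter_right _ (mono k), fun hh => hy.2 (hh ⟨hy.1, ?_⟩).2⟩
          right
          have := Set.mul_mem_mul hx.2 hxy
          rwa [mul_inv_cancel_left] at this
        have := Set.ncard_lt_ncard this (hD.inter_of_left _)
        omega
  rcases key K with h | h
  · exact h
  · have := Set.ncard_le_ncard (Set.inter_subset_left : D ∩ nbhd B K ⊆ D) hD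
    omega

theorem min_finite {φ : FreeGroup (Fin n) →* G} (hs : Function.Surjective φ)
    {R : Set (FreeGroup (Fin n))} (hRf : R.Finite) (hR : Subgroup.normalClosure R = φ.ker) (K : ℕ) :
    {C : Set G | (∃ h g, MinCut (fun i => φ (FreeGroup.of i)) h g C) ∧
      nn (fun i => φ (FreeGroup.of i)) C ≤ K ∧ 1 ∈ bd (fun i => φ (FreeGroup.of i)) C}.Finite := by
  obtain ⟨B, hB, H⟩ := min_connected hs hRf hR
  set s : Fin n → G := fun i => φ (FreeGroup.of i) with hsd
  have hfin : (Set.univ.pi (fun _ : Fin n => 𝒫 (nbhd B K)) ×ˢ (Set.univ : Set Prop)).Finite := by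
    apply Set.Finite.prod
    · exact Set.Finite.pi fun i => (nbhd_finite hB K).finite_subsets
    · exact Set.finite_univ
  refine Set.Finite.of_finite_image (f := fun C : Set G => ((fun i => dl (s i) C : Fin n → Set G), (1:G) ∈ C))
    (hfin.subset ?_) ?_
  · rintro _ ⟨C, ⟨⟨h, g, hC⟩, hK, h1⟩, rfl⟩
    refine ⟨fun i _ => ?_, trivial⟩
    have := sub_nbhd (bd_finite hC.2.1) h1 (H h g C hC) (bd_ncard.trans hK)
    exact (Set.subset_iUnion (fun i => dl (s i) C) i).trans this
  · rintro C - C' - heq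
    simp only [Prod.mk.injEq] at heq
    ext x
    obtain ⟨w, rfl⟩ := hs x
    have := (dl_ext (φ := φ) (fun i => congrFun heq.1 i) w 1).1 (iff_of_eq heq.2)
    rwa [one_mul] at this

theorem min_orbit {φ : FreeGroup (Fin n) →* G} (hs : Function.Surjective φ) {h g : G} {C : Set G}
    (hC : MinCut (fun i => φ (FreeGroup.of i)) h g C) : ∃ k : G,
      1 ∈ bd (fun i => φ (FreeGroup.of i)) (k • C) := by
  obtain ⟨x, hx⟩ := not_sep_triv hs hC.2.2.1
  obtain ⟨i, hi⟩ := Set.mem_iUnion.1 hx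
  refine ⟨x⁻¹, Set.mem_iUnion.2 ⟨i, ?_⟩⟩
  rw [dl_smul, Set.mem_smul_set_iff_inv_smul_mem]
  simpa using hi

theorem exists_opt {φ : FreeGroup (Fin n) →* G} (hs : Function.Surjective φ)
    {R : Set (FreeGroup (Fin n))} (hRf : R.Finite) (hR : Subgroup.normalClosure R = φ.ker) (β : ℕ → G)
    {h g : G} (hg : InfOrd g) (hex : ∃ C, AI C ∧ sep h g C) :
    ∃ C, AI C ∧ sep h g C ∧ ∀ D, AI D → sep h g D →
      nu β (fun i => φ (FreeGroup.of i)) C ≤ nu β (fun i => φ (FreeGroup.of i)) D := by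
  set s : Fin n → G := fun i => φ (FreeGroup.of i) with hsd
  classical
  obtain ⟨C0, hC0, hmin⟩ : ∃ C0, (AI C0 ∧ sep h g C0) ∧ ∀ D, (AI D ∧ sep h g D) → nn s C0 ≤ nn s D := by
    obtain ⟨C0, h0, h1⟩ := WellFounded.has_min (measure (nn s)).wf {C | AI C ∧ sep h g C} hex
    exact ⟨C0, h0, fun D hD => not_lt.1 (h1 D hD)⟩
  have hM0 : MinCut s h g C0 := ⟨hg, hC0.1, hC0.2, fun D h1 h2 => hmin D ⟨h1, h2⟩⟩
  have hfin : (nu β s '' {C | MinCut s h g C}).Finite := by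
    refine ((min_finite hs hRf hR (nn s C0)).image (nu β s)).subset ?_
    rintro _ ⟨C, hC, rfl⟩
    obtain ⟨k, hk⟩ := min_orbit hs hC
    refine ⟨k • C, ⟨⟨_, _, hC.smul k⟩, ?_, hk⟩, nu_smul _ _ _ _⟩
    rw [nn_smul]
    exact hC.2.2.2 _ hC0.1 hC0.2
  obtain ⟨_, ⟨C, hC, rfl⟩, hCm⟩ := Set.exists_min_image _ id hfin ⟨_, C0, hM0, rfl⟩
  refine ⟨C, hC.2.1, hC.2.2.1, fun D h1 h2 => ?_⟩
  rcases (hC.2.2.2 D h1 h2).lt_or_eq with h | h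
  · exact (nu_le_of_nn_lt h).le
  · exact hCm _ ⟨D, ⟨hg, h1, h2, fun E h3 h4 => h ▸ hC.2.2.2 E h3 h4⟩, rfl⟩

theorem Opt.minCut {β : ℕ → G} {s : Fin n → G} {C : Set G} (hC : C ∈ Opt β s) :
    ∃ h g, MinCut s h g C := by
  obtain ⟨h, g, h1, h2, h3, h4⟩ := hC
  exact ⟨h, g, h1, h2, h3, fun D hD hD' => nn_le_of_nu_le (h4 D hD hD')⟩

theorem Opt.smul {β : ℕ → G} {s : Fin n → G} {C : Set G} (hC : C ∈ Opt β s) (k : G) :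
    k • C ∈ Opt β s := by
  obtain ⟨h, g, h1, h2, h3, h4⟩ := hC
  refine ⟨k * h, g, h1, h2.smul k, (sep_smul _ _ _ _).2 h3, fun D hD hD' => ?_⟩
  rw [nu_smul, ← nu_smul β s k⁻¹ D]
  apply h4 _ (hD.smul _)
  rwa [← sep_smul k, smul_inv_smul]

theorem Opt.compl {β : ℕ → G} {s : Fin n → G} {C : Set G} (hC : C ∈ Opt β s) :
    Cᶜ ∈ Opt β s := by
  obtain ⟨h, g, h1, h2, h3, h4⟩ := hC
  refine ⟨h, g, h1, h2.compl, ?_, fun D hD hD' => ?_⟩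
  · have := (ray_isEnd h1 h).compl C h2
    have := (ray_isEnd h1.inv h).compl C h2
    simp only [sep] at *
    tauto
  · rw [nu_compl]; exact h4 D hD hD'

theorem opt_nf {φ : FreeGroup (Fin n) →* G} (hs : Function.Surjective φ)
    {R : Set (FreeGroup (Fin n))} (hRf : R.Finite) (hR : Subgroup.normalClosure R = φ.ker) {β : ℕ → G}
    (hβ : Function.Surjective β) (K : ℕ)
    (hcut : ∀ h g : G, InfOrd g → ∃ C, AI C ∧ sep h g C ∧ nn (fun i => φ (FreeGroup.of i)) C ≤ K)
    (hinf : ∀ H : Subgroup G, Infinite H → ∃ g ∈ H, InfOrd g) :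
    NestedFamily G (Opt β (fun i => φ (FreeGroup.of i))) := by
  have horb : ∃ A : Set (Set G), A.Finite ∧ A ⊆ Opt β (fun i => φ (FreeGroup.of i)) ∧
      ∀ C ∈ Opt β (fun i => φ (FreeGroup.of i)), ∃ D ∈ A, ∃ g : G, g • D = C := by
    refine ⟨_, (min_finite hs hRf hR K).inter_of_right (Opt β (fun i => φ (FreeGroup.of i))),
      Set.inter_subset_left, ?_⟩
    intro C hC
    obtain ⟨h, g, hm⟩ := Opt.minCut hC
    obtain ⟨k, hk⟩ := min_orbit hs hm
    refine ⟨k • C, ⟨Opt.smul hC k, ⟨_, _, hm.smul k⟩, ?_, hk⟩, k⁻¹, inv_smul_smul _ _⟩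
    obtain ⟨D, h1, h2, h3⟩ := hcut h g hm.1
    rw [nn_smul]
    exact (hm.2.2.2 D h1 h2).trans h3
  refine ⟨fun g C hC => Opt.smul hC g, fun C hC => Opt.compl hC, fun C hC D hD => opt_nested hβ _ C D hC hD, ?_, ?_, horb, ?_⟩
  · intro C hC
    by_contra hne
    rw [Set.not_nonempty_iff_eq_empty] at hne
    obtain ⟨h, g, hm⟩ := Opt.minCut hC
    apply hm.2.2.1
    simp [ray, hne]
  · intro x y
    obtain ⟨A, hA, hAO, hA'⟩ := horb
    have hf : (⋃ D ∈ A, (fun k : G => (x * k⁻¹) • D) '' dl (x⁻¹ * y) D).Finite := by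
      refine hA.biUnion fun D hD => Set.Finite.image _ ?_
      obtain ⟨h, g, hm⟩ := Opt.minCut (hAO hD)
      exact hm.2.1 _
    refine hf.subset ?_
    rintro C ⟨hC, hx, hy⟩
    obtain ⟨D, hD, g, rfl⟩ := hA' C hC
    refine Set.mem_biUnion hD ⟨g⁻¹ * x, ?_, ?_⟩
    · rw [mem_dl]
      rw [Set.mem_smul_set_iff_inv_smul_mem, smul_eq_mul] at hx hy
      rw [show g⁻¹ * x * (x⁻¹ * y) = g⁻¹ * y by group]
      tauto
    · simp
  · intro H hH
    obtain ⟨g, hgH, hg⟩ := hinf H hH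
    obtain ⟨C0, h1, h2, -⟩ := hcut 1 g hg
    obtain ⟨C1, a1, s1, m1⟩ := exists_opt hs hRf hR β hg ⟨C0, h1, h2⟩
    have hC1 : C1 ∈ Opt β (fun i => φ (FreeGroup.of i)) := ⟨1, g, hg, a1, s1, m1⟩
    have e1 := ray_isEnd hg 1
    have e2 := ray_isEnd hg.inv 1
    obtain ⟨C, hC, r1, r2⟩ : ∃ C ∈ Opt β (fun i => φ (FreeGroup.of i)), ray 1 g C ∧ ray 1 g⁻¹ Cᶜ := by
      by_cases hr : ray 1 g C1
      · refine ⟨C1, hC1, hr, (e2.compl _ a1).2 fun hr' => s1 ⟨fun _ => hr', fun _ => hr⟩⟩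
      · refine ⟨C1ᶜ, Opt.compl hC1, (e1.compl _ a1).2 hr, ?_⟩
        rw [_root_.compl_compl]
        by_contra hr'
        exact s1 ⟨fun h => absurd h hr, fun h => absurd h hr'⟩
    obtain ⟨J1, hJ1⟩ := eventually_atTop.1 r1
    obtain ⟨J2, hJ2⟩ := eventually_atTop.1 r2
    simp only [one_mul] at hJ1 hJ2
    set J := J1 + J2 + 1
    refine ⟨g ^ (2 * J), H.pow_mem hgH _, C, hC, ?_⟩
    have mem : ∀ x, x ∈ g ^ (2 * J) • C ↔ (g ^ (2 * J))⁻¹ * x ∈ C := fun x => by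
      rw [Set.mem_smul_set_iff_inv_smul_mem, smul_eq_mul]
    -- three points
    have p1 : g ^ J ∈ C := hJ1 _ (by omega)
    have p1' : g ^ J ∉ g ^ (2 * J) • C := by
      rw [mem, show (g ^ (2 * J))⁻¹ * g ^ J = g⁻¹ ^ J by
        rw [two_mul, pow_add]; group]
      exact hJ2 _ (by omega)
    have p2 : g ^ (3 * J) ∈ C := hJ1 _ (by omega)
    have p2' : g ^ (3 * J) ∈ g ^ (2 * J) • C := by
      rw [mem, show (g ^ (2 * J))⁻¹ * g ^ (3 * J) = g ^ J by
        rw [show 3 * J = 2 * J + J by ring, pow_add]; group]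
      exact p1
    have p3 : g⁻¹ ^ J ∉ C := hJ2 _ (by omega)
    have p3' : g⁻¹ ^ J ∉ g ^ (2 * J) • C := by
      rw [mem, show (g ^ (2 * J))⁻¹ * g⁻¹ ^ J = g⁻¹ ^ (3 * J) by
        rw [show 3 * J = J + 2 * J by ring, pow_add _ J, inv_pow, inv_pow,
          ← mul_inv_rev, ← mul_inv_rev, ← pow_add, ← pow_add, add_comm] ]
      exact hJ2 _ (by omega)
    rcases opt_nested hβ _ _ _ (Opt.smul hC (g ^ (2 * J))) hC with h | h | h | h
    · exact ⟨h, fun hh => p1' (hh p1)⟩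
    · exact absurd p2 (h p2')
    · exact absurd (h p3') p3
    · exact absurd (h p1) p1'

end Orbits

section Cuts
open Pointwise Filter

/-- words with a given first letter -/
def sw {m : ℕ} (x : Fin m × Bool) : Set (FreeGroup (Fin m)) := {w | w.toWord.head? = some x}

theorem mem_sw {m : ℕ} {x : Fin m × Bool} {w : FreeGroup (Fin m)} :
    w ∈ sw x ↔ w.toWord.head? = some x := Iff.rfl

theorem sw_AI {m : ℕ} (x : Fin m × Bool) : AI (sw x) := by
  apply AI_of_gen (φ := MonoidHom.id _) Function.surjective_id
  intro y
  refine Set.Finite.subset (s := {1, (FreeGroup.of y)⁻¹}) (by simp) ?_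
  intro w hw
  by_contra hcon
  simp only [Set.mem_insert_iff, Set.mem_singleton_iff, not_or] at hcon
  apply hw
  rw [MonoidHom.id_apply, mem_sw, mem_sw]
  have hne : w.toWord ≠ [] := fun h => hcon.1 (FreeGroup.toWord_eq_nil_iff.1 h)
  have hr : FreeGroup.IsReduced w.toWord := FreeGroup.isReduced_toWord
  have hmk : FreeGroup.mk w.toWord = w := FreeGroup.mk_toWord
  obtain ⟨L, a, hL⟩ : ∃ L a, w.toWord = L ++ [a] :=
    ⟨_, _, (List.dropLast_append_getLast hne).symm⟩
  by_cases ha : a = (y, false)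
  · subst ha
    have h1 : w * FreeGroup.of y = FreeGroup.mk L := by
      rw [← hmk, hL, ← FreeGroup.mul_mk]
      show FreeGroup.mk L * (FreeGroup.of y)⁻¹ * FreeGroup.of y = _
      rw [inv_mul_cancel_right]
    have hLr : FreeGroup.IsReduced L := hr.infix ⟨[], [(y, false)], by simp [hL]⟩
    rw [h1, FreeGroup.toWord_mk, hLr.reduce_eq, hL]
    have hLne : L ≠ [] := by
      rintro rfl
      apply hcon.2
      rw [← hmk, hL]; rfl
    rw [List.head?_append_of_ne_nil _ hLne]
  · have hLr : FreeGroup.IsReduced (w.toWord ++ [(y, true)]) := by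
      rw [hL]
      refine FreeGroup.IsReduced.append_overlap (L₂ := [a]) (by rwa [← hL]) ?_ (by simp)
      rw [List.singleton_append, FreeGroup.isReduced_cons_cons]
      refine ⟨fun h => ?_, FreeGroup.IsReduced.singleton⟩
      obtain ⟨a1, a2⟩ := a
      cases a2
      · exact absurd (by rw [show a1 = y from h]) ha
      · rfl
    rw [FreeGroup.toWord_mul, FreeGroup.toWord_of, hLr.reduce_eq, List.head?_append_of_ne_nil _ hne]

theorem free_cut {m : ℕ} (w : FreeGroup (Fin m)) (hw : w ≠ 1) : ∃ u c : FreeGroup (Fin m),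
    w = u * c * u⁻¹ ∧ ∃ x, (∀ j : ℕ, j ≠ 0 → c ^ j ∈ sw x) ∧ (∀ j : ℕ, j ≠ 0 → c⁻¹ ^ j ∉ sw x) := by
  have hr : FreeGroup.IsReduced w.toWord := FreeGroup.isReduced_toWord
  have hmk : FreeGroup.mk w.toWord = w := FreeGroup.mk_toWord
  have hcyc := FreeGroup.reduceCyclically.isCyclicallyReduced hr
  have hconj := FreeGroup.reduceCyclically.conj_conjugator_reduceCyclically w.toWord
  set L := FreeGroup.reduceCyclically w.toWord with hL
  set U := FreeGroup.reduceCyclically.conjugator w.toWord with hU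
  have hw1 : w = FreeGroup.mk U * FreeGroup.mk L * (FreeGroup.mk U)⁻¹ := by
    rw [FreeGroup.inv_mk, FreeGroup.mul_mk, FreeGroup.mul_mk, hconj, hmk]
  have hLne : L ≠ [] := by
    intro h
    apply hw
    rw [hw1, h, ← FreeGroup.one_eq_mk]; group
  refine ⟨_, _, hw1, L.head hLne, ?_⟩
  have hpow : ∀ j : ℕ, (FreeGroup.mk L ^ j).toWord = (List.replicate j L).flatten := by
    intro j
    rw [FreeGroup.toWord_pow, FreeGroup.toWord_mk, hcyc.isReduced.reduce_eq,
      (hcyc.flatten_replicate j).isReduced.reduce_eq]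
  constructor
  · intro j hj
    rw [mem_sw, hpow, List.head?_flatten_replicate hj, List.head?_eq_some_head hLne]
  · intro j hj h
    rw [mem_sw, inv_pow, FreeGroup.toWord_inv, hpow, FreeGroup.invRev, List.head?_reverse,
      List.getLast?_map, List.getLast?_flatten_replicate hj, List.getLast?_eq_some_getLast hLne] at h
    have h2 := hcyc.2 _ (List.getLast?_eq_some_getLast hLne) _ (List.head?_eq_some_head hLne)
    simp only [Option.map_some, Option.some.injEq] at h
    have h3 := congrArg Prod.fst h
    have h4 := congrArg Prod.snd h
    have h5 := h2 h3
    rw [← h5] at h4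
    simp at h4

variable {G : Type*} [Group G]

theorem infOrd_of_ne {m : ℕ} {K : Subgroup G} (b : FreeGroupBasis (Fin m) K) {f : K} (hf : f ≠ 1) :
    InfOrd (f : G) := by
  have h1 : b.repr f ≠ 1 := by simpa using hf
  have h2 : Function.Injective (fun n : ℕ => (b.repr f) ^ n) := by
    rw [injective_pow_iff_not_isOfFinOrder]
    intro h
    exact h1 ((isOfFinOrder_iff_eq_one _).1 h)
  intro i j hij
  apply h2
  have : f ^ i = f ^ j := Subtype.ext (by simpa using hij)
  show b.repr f ^ i = b.repr f ^ j
  rw [← map_pow, ← map_pow, this]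

theorem infinite_sub_infOrd {m : ℕ} (K : Subgroup G) [K.Normal] [K.FiniteIndex] (b : FreeGroupBasis (Fin m) K)
    (H : Subgroup G) (hH : Infinite H) : ∃ g ∈ H, InfOrd g := by
  have : Finite (G ⧸ K) := inferInstance
  obtain ⟨x, y, hxy, h⟩ := Finite.exists_ne_map_eq_of_infinite (fun x : H => ((x : G) : G ⧸ K))
  have hm : (x : G)⁻¹ * y ∈ K := QuotientGroup.eq.1 h
  refine ⟨(x : G)⁻¹ * y, H.mul_mem (H.inv_mem x.2) y.2, infOrd_of_ne b (f := ⟨_, hm⟩) ?_⟩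
  intro h1
  apply hxy
  have := congrArg Subtype.val h1
  exact Subtype.ext (inv_mul_eq_one.1 this)

theorem rho_exists {m : ℕ} (K : Subgroup G) [hK : K.Normal] [K.FiniteIndex] (b : FreeGroupBasis (Fin m) K) :
    ∃ ρ : G → FreeGroup (Fin m), (∀ (f : K) g, ρ (f * g) = b.repr f * ρ g) ∧
      ∀ E : Set (FreeGroup (Fin m)), AI E → AI (ρ ⁻¹' E) := by
  have hfinq : Finite (G ⧸ K) := inferInstance
  have hmem : ∀ g : G, g * ((g : G ⧸ K).out)⁻¹ ∈ K := by
    intro g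
    have h1 : (((g : G ⧸ K).out : G) : G ⧸ K) = g := QuotientGroup.out_eq' _
    have h2 := QuotientGroup.eq.1 h1
    have := hK.mem_comm h2
    exact this
  have hc : ∀ (f : K) (g : G), (((f : G) * g : G) : G ⧸ K) = g := by
    intro f g
    rw [QuotientGroup.mk_mul, (QuotientGroup.eq_one_iff (f : G)).2 f.2, one_mul]
  set ρ : G → FreeGroup (Fin m) := fun g => b.repr ⟨_, hmem g⟩ with hρ
  refine ⟨ρ, ?_, ?_⟩
  · intro f g
    simp only [hρ]
    rw [← map_mul]
    congr 1
    apply Subtype.ext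
    simp only [Subgroup.coe_mul, hc, mul_assoc]
  · intro E hE t
    have hm2 : ∀ q : G ⧸ K, q.out * t * ((q * (t : G ⧸ K)).out)⁻¹ ∈ K := by
      intro q
      have := hmem (q.out * t)
      rwa [QuotientGroup.mk_mul, QuotientGroup.out_eq'] at this
    have hfin : (⋃ q : G ⧸ K, (fun w => ((b.repr.symm w : K) : G) * q.out) ''
        dl (b.repr ⟨_, hm2 q⟩) E).Finite := Set.finite_iUnion fun q => (hE _).image _
    refine hfin.subset ?_
    intro g hg
    refine Set.mem_iUnion.2 ⟨(g : G ⧸ K), ρ g, ?_, ?_⟩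
    · rw [mem_dl, Set.mem_preimage, Set.mem_preimage] at hg
      rw [mem_dl]
      convert hg using 3
      simp only [hρ]
      rw [← map_mul]
      congr 1
      apply Subtype.ext
      simp only [Subgroup.coe_mul, QuotientGroup.mk_mul]
      group
    · simp [hρ]

theorem cuts_exist {n m : ℕ} (s : Fin n → G) (K : Subgroup G) [hK : K.Normal] [K.FiniteIndex]
    (b : FreeGroupBasis (Fin m) K) :
    ∃ N : ℕ, ∀ h g : G, InfOrd g → ∃ C, AI C ∧ sep h g C ∧ nn s C ≤ N := by
  obtain ⟨ρ, hρ, hAI⟩ := rho_exists K b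
  refine ⟨∑ x : Fin m × Bool, nn s (ρ ⁻¹' sw x), ?_⟩
  intro h g hg
  obtain ⟨k, hk, -, hgk⟩ := Subgroup.exists_pow_mem_of_index_ne_zero
    (Subgroup.FiniteIndex.index_ne_zero (H := K)) g
  set f : K := ⟨g ^ k, hgk⟩ with hf
  have hfne : b.repr f ≠ 1 := by
    intro h1
    have h2 : f = 1 := by simpa using h1
    have h3 : g ^ k = g ^ 0 := by
      rw [pow_zero]; exact congrArg Subtype.val h2
    exact hk.ne' (hg h3)
  obtain ⟨u, c, hw, x, hx1, hx2⟩ := free_cut (b.repr f) hfne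
  have hcinf : InfOrd c := by
    show Function.Injective (fun n : ℕ => c ^ n)
    rw [injective_pow_iff_not_isOfFinOrder]
    intro h
    have := (isOfFinOrder_iff_eq_one _).1 h
    apply hfne
    rw [hw, this]; group
  set u' : K := b.repr.symm u with hu'
  have hC := hAI _ (sw_AI x)
  have hpow : ∀ j : ℕ, ρ ((u' : G)⁻¹ * g ^ (k * j)) = 1 * c ^ j * (u⁻¹ * ρ 1) := by
    intro j
    have h1 : (u' : G)⁻¹ * g ^ (k * j) = ((u'⁻¹ * f ^ j : K) : G) * 1 := by
      simp [hf, pow_mul]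
    rw [h1, hρ, map_mul, map_pow, hw, conj_pow, map_inv, hu', MulEquiv.apply_symm_apply]
    group
  have hpow' : ∀ j : ℕ, ρ ((u' : G)⁻¹ * g⁻¹ ^ (k * j)) = 1 * c⁻¹ ^ j * (u⁻¹ * ρ 1) := by
    intro j
    have h1 : (u' : G)⁻¹ * g⁻¹ ^ (k * j) = ((u'⁻¹ * f⁻¹ ^ j : K) : G) * 1 := by
      simp [hf, pow_mul]
    rw [h1, hρ, map_mul, map_pow, map_inv _ f, hw, conj_inv, conj_pow, map_inv, hu', MulEquiv.apply_symm_apply]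
    group
  have htend : Tendsto (fun j : ℕ => k * j) atTop atTop := tendsto_id.const_mul_atTop' hk
  have r1 : ray (u' : G)⁻¹ g (ρ ⁻¹' sw x) := by
    refine (ray_dich hg _ hC).resolve_right fun hcon => ?_
    have h1 := htend.eventually hcon
    have h2 : ∀ᶠ j : ℕ in atTop, 1 * c ^ j * (u⁻¹ * ρ 1) ∈ sw x := by
      rw [ray_mul hcinf 1 _ (sw_AI x)]
      filter_upwards [eventually_ge_atTop 1] with j hj
      rw [one_mul]
      exact hx1 j (by omega)
    obtain ⟨j, h3, h4⟩ := (h1.and h2).exists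
    rw [Set.mem_preimage, hpow] at h3
    exact h3 h4
  have r2 : ¬ ray (u' : G)⁻¹ g⁻¹ (ρ ⁻¹' sw x) := by
    intro hcon
    have h1 := htend.eventually hcon
    have h2 : ∀ᶠ j : ℕ in atTop, 1 * c⁻¹ ^ j * (u⁻¹ * ρ 1) ∈ (sw x)ᶜ := by
      rw [ray_mul hcinf.inv 1 _ (sw_AI x).compl]
      filter_upwards [eventually_ge_atTop 1] with j hj
      rw [one_mul]
      exact hx2 j (by omega)
    obtain ⟨j, h3, h4⟩ := (h1.and h2).exists
    rw [Set.mem_preimage, hpow'] at h3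
    exact h4 h3
  refine ⟨(h * u') • (ρ ⁻¹' sw x), hC.smul _, ?_, ?_⟩
  · have := (sep_smul (h * u') (u' : G)⁻¹ g (ρ ⁻¹' sw x)).2 (fun hh => r2 (hh.1 r1))
    rwa [mul_inv_cancel_right] at this
  · rw [nn_smul]
    exact Finset.single_le_sum (f := fun x => nn s (ρ ⁻¹' sw x)) (fun _ _ => Nat.zero_le _) (Finset.mem_univ x)

theorem part_one (hfg : Group.FG G) (hvf : VirtuallyFree G) (hco : CoHopfian G) :
    Rigid G ∧ ∃ B : Set G, B.Finite ∧ ∀ H : Subgroup G, (H : Set G).Finite →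
      ∃ g, ∀ h ∈ H, g * h * g⁻¹ ∈ B := by
  obtain ⟨K, hK, hKf, m, ⟨b⟩⟩ := vf_setup hfg hvf
  obtain ⟨n, φ, hs, R, hRf, hR⟩ := (fp_of_basis K b).out
  have hcount : Countable G := hs.countable
  obtain ⟨β, hβ⟩ := exists_surjective_nat G
  rcases finite_or_infinite G with hfin | hinf
  · refine ⟨?_, Set.univ, Set.finite_univ, fun _ _ => ⟨1, fun _ _ => trivial⟩⟩
    intro θ hθ
    obtain ⟨g', hg'⟩ := hθ ⊤ (Set.toFinite _)
    apply Finite.injective_iff_bijective.1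
    intro a a' haa
    have h1 := hg' a trivial
    have h2 := hg' a' trivial
    rw [haa] at h1
    exact h1.trans h2.symm
  · obtain ⟨N, hN⟩ := cuts_exist (fun i => φ (FreeGroup.of i)) K b
    have hnf := opt_nf hs hRf hR hβ N hN (infinite_sub_infOrd K b)
    refine nf_main hnf ?_ hco
    have : Infinite (⊤ : Subgroup G) := Subgroup.topEquiv.toEquiv.infinite_iff.2 hinf
    obtain ⟨g, -, hg⟩ := infinite_sub_infOrd K b ⊤ this
    obtain ⟨C, h1, h2, -⟩ := hN 1 g hg
    obtain ⟨D, a, s, m⟩ := exists_opt hs hRf hR β hg ⟨C, h1, h2⟩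
    exact ⟨D, 1, g, hg, a, s, m⟩

end Cuts

section Model

/-- quantifier-free disjunctions -/
theorem isQF_iSup {L : FirstOrder.Language} {α β : Type*} [Finite β] {n : ℕ}
    {f : β → L.BoundedFormula α n} (h : ∀ b, (f b).IsQF) :
    (FirstOrder.Language.BoundedFormula.iSup f).IsQF := by
  have key : ∀ l : List (L.BoundedFormula α n), (∀ φ ∈ l, φ.IsQF) → (l.foldr (· ⊔ ·) ⊥).IsQF := by
    intro l
    induction l with
    | nil => intro _; exact FirstOrder.Language.BoundedFormula.isQF_bot
    | cons a l ih =>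
      intro hl
      exact (hl a (by simp)).sup (ih fun φ hφ => hl φ (by simp [hφ]))
  unfold FirstOrder.Language.BoundedFormula.iSup
  apply key
  intro φ hφ
  obtain ⟨b, -, rfl⟩ := List.mem_map.1 hφ
  exact h b

theorem isQF_iInf {L : FirstOrder.Language} {α β : Type*} [Finite β] {n : ℕ}
    {f : β → L.BoundedFormula α n} (h : ∀ b, (f b).IsQF) :
    (FirstOrder.Language.BoundedFormula.iInf f).IsQF := by
  have key : ∀ l : List (L.BoundedFormula α n), (∀ φ ∈ l, φ.IsQF) → (l.foldr (· ⊓ ·) ⊤).IsQF := by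
    intro l
    induction l with
    | nil => intro _; exact FirstOrder.Language.BoundedFormula.IsQF.top
    | cons a l ih =>
      intro hl
      exact (hl a (by simp)).inf (ih fun φ hφ => hl φ (by simp [hφ]))
  unfold FirstOrder.Language.BoundedFormula.iInf
  apply key
  intro φ hφ
  obtain ⟨b, -, rfl⟩ := List.mem_map.1 hφ
  exact h b

theorem isAE_alls {α : Type*} : ∀ {n : ℕ} {φ : groupLang.BoundedFormula α n}, IsAE φ → IsAE φ.alls
  | 0, _, h => h
  | _ + 1, φ, h => isAE_alls (φ := φ.all) (IsAE.all h)

/-- product term -/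
def tmul {γ : Type*} (a b : groupLang.Term γ) : groupLang.Term γ :=
  FirstOrder.Language.Term.func (L := groupLang) (l := 2) GroupFunc.mul ![a, b]
/-- inverse term -/
def tinv {γ : Type*} (a : groupLang.Term γ) : groupLang.Term γ :=
  FirstOrder.Language.Term.func (L := groupLang) (l := 1) GroupFunc.inv ![a]
/-- unit term -/
def tone {γ : Type*} : groupLang.Term γ :=
  FirstOrder.Language.Term.func (L := groupLang) (l := 0) GroupFunc.one ![]

theorem tmul_realize {γ G : Type*} [Group G] (v : γ → G) (a b : groupLang.Term γ) :
    (tmul a b).realize v = a.realize v * b.realize v := rfl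
theorem tinv_realize {γ G : Type*} [Group G] (v : γ → G) (a : groupLang.Term γ) :
    (tinv a).realize v = (a.realize v)⁻¹ := rfl
theorem tone_realize {γ G : Type*} [Group G] (v : γ → G) :
    (tone : groupLang.Term γ).realize v = 1 := rfl

/-- term of a word -/
def tword {γ : Type*} {n : ℕ} (x : Fin n → groupLang.Term γ) : List (Fin n × Bool) → groupLang.Term γ
  | [] => tone
  | (i, true) :: L => tmul (x i) (tword x L)
  | (i, false) :: L => tmul (tinv (x i)) (tword x L)

theorem tword_realize {γ G : Type*} [Group G] {n : ℕ} (x : Fin n → groupLang.Term γ) (v : γ → G)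
    (L : List (Fin n × Bool)) :
    (tword x L).realize v = FreeGroup.lift (fun i => (x i).realize v) (FreeGroup.mk L) := by
  induction L with
  | nil => rw [tword, tone_realize, ← FreeGroup.one_eq_mk, map_one]
  | cons a L ih =>
    obtain ⟨i, b⟩ := a
    cases b <;> simp [tword, tmul_realize, tinv_realize, ih, FreeGroup.lift_mk]

/-- term of an element of the free group -/
def tfree {n : ℕ} (w : FreeGroup (Fin n)) : groupLang.Term (Empty ⊕ Fin (n + 1)) :=
  tword (fun i => FirstOrder.Language.Term.var (Sum.inr (Fin.castSucc i))) w.toWord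

/-- last variable -/
def tlast {n : ℕ} : groupLang.Term (Empty ⊕ Fin (n + 1)) :=
  FirstOrder.Language.Term.var (Sum.inr (Fin.last n))

/-- the formula expressing that some relation fails or some pair of tuples is conjugate -/
noncomputable def conjForm {n k : ℕ} {I J : Type*} [Finite I] [Finite J] (r : I → FreeGroup (Fin n))
    (p q : J → Fin k → FreeGroup (Fin n)) : groupLang.BoundedFormula Empty (n + 1) :=
  (FirstOrder.Language.BoundedFormula.iSup fun i => ((tfree (r i)).bdEqual tone).not) ⊔
    (FirstOrder.Language.BoundedFormula.iSup fun j => FirstOrder.Language.BoundedFormula.iInf fun l =>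
      (tmul (tmul tlast (tfree (p j l))) (tinv tlast)).bdEqual (tfree (q j l)))

theorem conjForm_isAE {n k : ℕ} {I J : Type*} [Finite I] [Finite J] (r : I → FreeGroup (Fin n))
    (p q : J → Fin k → FreeGroup (Fin n)) : IsAE (conjForm r p q).ex.alls := by
  refine isAE_alls (IsAE.of_existential (IsExistentialQF.ex (IsExistentialQF.of_isQF ?_)))
  apply FirstOrder.Language.BoundedFormula.IsQF.sup
  · exact isQF_iSup fun i => (FirstOrder.Language.BoundedFormula.IsAtomic.equal _ _).isQF.not
  · exact isQF_iSup fun j => isQF_iInf fun l =>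
      (FirstOrder.Language.BoundedFormula.IsAtomic.equal _ _).isQF

theorem tfree_realize {G : Type*} [Group G] {n : ℕ} (w : FreeGroup (Fin n)) (v : Empty → G) (x : Fin n → G)
    (y : G) : (tfree w).realize (Sum.elim v (Fin.snoc x y)) = FreeGroup.lift x w := by
  rw [tfree, tword_realize, FreeGroup.mk_toWord]
  congr 2
  ext i
  simp [FirstOrder.Language.Term.realize]

theorem tlast_realize {G : Type*} [Group G] {n : ℕ} (v : Empty → G) (x : Fin n → G)
    (y : G) : tlast.realize (Sum.elim v (Fin.snoc x y : Fin (n + 1) → G)) = y := by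
  simp [tlast, FirstOrder.Language.Term.realize]

theorem conjForm_realize {G : Type*} [Group G] {n k : ℕ} {I J : Type*} [Finite I] [Finite J]
    (r : I → FreeGroup (Fin n)) (p q : J → Fin k → FreeGroup (Fin n)) :
    G ⊨ ((conjForm r p q).ex.alls : groupLang.Sentence) ↔
      ∀ ψ : FreeGroup (Fin n) →* G, (∃ i, ψ (r i) ≠ 1) ∨
        ∃ j, ∃ y : G, ∀ l, y * ψ (p j l) * y⁻¹ = ψ (q j l) := by
  rw [FirstOrder.Language.Sentence.Realize, FirstOrder.Language.BoundedFormula.realize_alls]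
  simp only [FirstOrder.Language.BoundedFormula.realize_ex, conjForm,
    FirstOrder.Language.BoundedFormula.realize_sup, FirstOrder.Language.BoundedFormula.realize_iSup,
    FirstOrder.Language.BoundedFormula.realize_iInf, FirstOrder.Language.BoundedFormula.realize_not,
    FirstOrder.Language.BoundedFormula.realize_bdEqual, tmul_realize, tinv_realize, tone_realize,
    tfree_realize, tlast_realize]
  constructor
  · intro h ψ
    obtain ⟨y, hy⟩ := h (fun i => ψ (FreeGroup.of i))
    have : FreeGroup.lift (fun i => ψ (FreeGroup.of i)) = ψ := by ext i; simp
    rw [this] at hy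
    rcases hy with h | ⟨j, h⟩
    · exact Or.inl h
    · exact Or.inr ⟨j, y, h⟩
  · intro h xs
    rcases h (FreeGroup.lift xs) with h | ⟨j, y, h⟩
    · exact ⟨1, Or.inl h⟩
    · exact ⟨y, Or.inr ⟨j, h⟩⟩

theorem ae_transfer {G G' : Type*} [Group G] [Group G'] (hAE : AEEquivalent G G') {n k : ℕ}
    {I J : Type*} [Finite I] [Finite J] (r : I → FreeGroup (Fin n)) (p q : J → Fin k → FreeGroup (Fin n))
    (φ : FreeGroup (Fin n) →* G) (hr : ∀ i, φ (r i) = 1)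
    (hpq : ∀ j, ¬ ∃ y : G, ∀ l, y * φ (p j l) * y⁻¹ = φ (q j l)) :
    ∃ φ' : FreeGroup (Fin n) →* G', (∀ i, φ' (r i) = 1) ∧
      ∀ j, ¬ ∃ y : G', ∀ l, y * φ' (p j l) * y⁻¹ = φ' (q j l) := by
  have h := hAE _ (conjForm_isAE r p q)
  rw [conjForm_realize, conjForm_realize] at h
  have h1 : ¬ ∀ ψ : FreeGroup (Fin n) →* G', (∃ i, ψ (r i) ≠ 1) ∨
        ∃ j, ∃ y : G', ∀ l, y * ψ (p j l) * y⁻¹ = ψ (q j l) := by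
    intro h2
    rcases h.2 h2 φ with ⟨i, hi⟩ | ⟨j, hj⟩
    · exact hi (hr i)
    · exact hpq j hj
  push Not at h1
  obtain ⟨ψ, h2, h3⟩ := h1
  refine ⟨ψ, h2, fun j ⟨y, hy⟩ => ?_⟩
  obtain ⟨l, hl⟩ := h3 j y
  exact hl (hy l)

theorem exists_hom_conj {G G' : Type*} [Group G] [Group G'] (hAE : AEEquivalent G G')
    (hfp : Group.IsFinitelyPresented G) {B : Set G} (hB : B.Finite)
    (hBc : ∀ H : Subgroup G, (H : Set G).Finite → ∃ g, ∀ h ∈ H, g * h * g⁻¹ ∈ B) (k : ℕ) :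
    ∃ θ : G →* G', ∀ p q : Fin k → G, (Subgroup.closure (Set.range p) : Set G).Finite →
      (Subgroup.closure (Set.range q) : Set G).Finite →
      (∃ y : G', ∀ l, y * θ (p l) * y⁻¹ = θ (q l)) → ∃ y : G, ∀ l, y * p l * y⁻¹ = q l := by
  obtain ⟨n, φ, hs, R, hRf, hR⟩ := hfp.out
  have := hB.to_subtype
  have := hRf.to_subtype
  choose σ hσ using hs
  let J := {pq : (Fin k → B) × (Fin k → B) // ¬ ∃ y : G, ∀ l, y * (pq.1 l : G) * y⁻¹ = pq.2 l}
  obtain ⟨φ', h1, h2⟩ := ae_transfer hAE (fun r : R => (r : FreeGroup (Fin n)))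
    (fun (j : J) l => σ (j.1.1 l)) (fun (j : J) l => σ (j.1.2 l)) φ
    (fun r => by rw [← MonoidHom.mem_ker, ← hR]; exact Subgroup.subset_normalClosure r.2)
    (fun j => by simp only [hσ]; exact j.2)
  obtain ⟨θ, hθ⟩ := exists_hom_of_rel (fun g => ⟨σ g, hσ g⟩) hR φ' (fun r hr => h1 ⟨r, hr⟩)
  simp only [← hθ, hσ] at h2
  refine ⟨θ, ?_⟩
  rintro p q hp hq ⟨y, hy⟩
  obtain ⟨a, ha⟩ := hBc _ hp
  obtain ⟨b, hb⟩ := hBc _ hq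
  by_contra hcon
  refine h2 ⟨(fun l => ⟨a * p l * a⁻¹, ha _ (Subgroup.subset_closure ⟨l, rfl⟩)⟩,
    fun l => ⟨b * q l * b⁻¹, hb _ (Subgroup.subset_closure ⟨l, rfl⟩)⟩), ?_⟩ ?_
  · rintro ⟨z, hz⟩
    apply hcon
    refine ⟨b⁻¹ * z * a, fun l => ?_⟩
    have := hz l
    simp only at this
    calc b⁻¹ * z * a * p l * (b⁻¹ * z * a)⁻¹ = b⁻¹ * (z * (a * p l * a⁻¹) * z⁻¹) * b := by group
      _ = _ := by rw [this]; group
  · refine ⟨θ b * y * (θ a)⁻¹, fun l => ?_⟩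
    simp only [map_mul, map_inv]
    calc _ = θ b * (y * θ (p l) * y⁻¹) * (θ b)⁻¹ := by group
      _ = _ := by rw [hy]

theorem homPow_coe {G : Type*} [Group G] (f : G →* G) (n : ℕ) : ⇑(homPow f n) = f^[n] := by
  induction n with
  | zero => rfl
  | succ n ih =>
    rw [Function.iterate_succ', ← ih]; rfl

theorem rigid_power {G : Type*} [Group G] (hrig : Rigid G) {B : Set G} (hB : B.Finite)
    (hBc : ∀ H : Subgroup G, (H : Set G).Finite → ∃ g, ∀ h ∈ H, g * h * g⁻¹ ∈ B) (f : G →* G)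
    (hf : ∀ p q : Fin (B.ncard) → G, (Subgroup.closure (Set.range p) : Set G).Finite →
      (Subgroup.closure (Set.range q) : Set G).Finite →
      (∃ y : G, ∀ l, y * f (p l) * y⁻¹ = f (q l)) → ∃ y : G, ∀ l, y * p l * y⁻¹ = q l) :
    Function.Injective f := by
  set k := B.ncard with hk
  let Y := {p : Fin k → G // (Subgroup.closure (Set.range p) : Set G).Finite}
  let S : Setoid Y :=
    { r := fun p q => ∃ y : G, ∀ l, y * p.1 l * y⁻¹ = q.1 l
      iseqv :=
        { refl := fun p => ⟨1, fun l => by simp⟩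
          symm := fun {p q} ⟨y, hy⟩ => ⟨y⁻¹, fun l => by rw [← hy l]; group⟩
          trans := fun {p q s} ⟨y, hy⟩ ⟨z, hz⟩ => ⟨z * y, fun l => by
            rw [← hz l, ← hy l]; group⟩ } }
  have hfin : ∀ p : Y, (Subgroup.closure (Set.range (fun l => f (p.1 l))) : Set G).Finite := by
    intro p
    have h1 : Set.range (fun l => f (p.1 l)) = f '' Set.range p.1 := by
      rw [← Set.range_comp]; rfl
    rw [h1, ← MonoidHom.map_closure, Subgroup.coe_map]
    exact p.2.image _
  let F : Y → Y := fun p => ⟨fun l => f (p.1 l), hfin p⟩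
  let Fq : Quotient S → Quotient S := Quotient.map F (by
    rintro p q ⟨y, hy⟩
    exact ⟨f y, fun l => by simp only [F]; rw [← map_inv, ← map_mul, ← map_mul, hy]⟩)
  have hFq : Function.Injective Fq := by
    intro a b hab
    induction a using Quotient.inductionOn with | _ p =>
    induction b using Quotient.inductionOn with | _ q =>
    exact Quotient.sound (hf p.1 q.1 p.2 q.2 (Quotient.exact hab))
  have hQfin : Finite (Quotient S) := by
    have hT : {p : Y | ∀ l, p.1 l ∈ B}.Finite := by
      refine Set.Finite.of_finite_image (f := Subtype.val) ?_ Subtype.val_injective.injOn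
      refine (Set.Finite.pi' (fun _ : Fin k => hB)).subset ?_
      rintro _ ⟨p, hp, rfl⟩
      exact hp
    have := hT.to_subtype
    refine Finite.of_surjective (fun p : {p : Y | ∀ l, p.1 l ∈ B} => (Quotient.mk S p.1)) ?_
    intro a
    induction a using Quotient.inductionOn with | _ p =>
    obtain ⟨a, ha⟩ := hBc _ p.2
    have hm : ∀ l, a * p.1 l * a⁻¹ ∈ B := fun l => ha _ (Subgroup.subset_closure ⟨l, rfl⟩)
    have hp' : (Subgroup.closure (Set.range (fun l => a * p.1 l * a⁻¹)) : Set G).Finite := by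
      have h1 : Set.range (fun l => a * p.1 l * a⁻¹) = (MulAut.conj a).toMonoidHom '' Set.range p.1 := by
        rw [← Set.range_comp]; rfl
      rw [h1, ← MonoidHom.map_closure, Subgroup.coe_map]
      exact p.2.image _
    refine ⟨⟨⟨fun l => a * p.1 l * a⁻¹, hp'⟩, hm⟩, Quotient.sound ⟨a⁻¹, fun l => ?_⟩⟩
    simp only
    group
  let e : Equiv.Perm (Quotient S) := Equiv.ofBijective Fq (Finite.injective_iff_bijective.1 hFq)
  obtain ⟨N, hN, heN⟩ : ∃ N : ℕ, 0 < N ∧ e ^ N = 1 := ⟨orderOf e, orderOf_pos e, pow_orderOf_eq_one e⟩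
  have hiter : ∀ (m : ℕ) (p : Y), ∃ h, (e ^ m) (Quotient.mk S p) = Quotient.mk S ⟨fun l => f^[m] (p.1 l), h⟩ := by
    intro m
    induction m with
    | zero => intro p; exact ⟨p.2, rfl⟩
    | succ m ih =>
      intro p
      obtain ⟨h, hh⟩ := ih (F p)
      refine ⟨h, ?_⟩
      rw [pow_succ, Equiv.Perm.mul_apply]
      exact hh
  have hbij : Function.Bijective (homPow f N) := by
    apply hrig
    intro H hH
    have := hH.to_subtype
    have hcard : Nat.card H ≤ k := by
      obtain ⟨g, hg⟩ := hBc H hH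
      have := hB.to_subtype
      have h1 := Nat.card_le_card_of_injective (fun h : H => (⟨g * h * g⁻¹, hg h h.2⟩ : B))
        (fun a b hab => by
          have := congrArg Subtype.val hab
          simp only [mul_left_inj, mul_right_inj] at this
          exact Subtype.ext this)
      rwa [Nat.card_coe_set_eq] at h1
    obtain ⟨p, hp⟩ : ∃ p : Fin k → H, Function.Surjective p := by
      have e := Finite.equivFin H
      have hpos : 0 < Nat.card H := Nat.card_pos
      refine ⟨fun i => if h : (i : ℕ) < Nat.card H then e.symm ⟨i, h⟩ else 1, fun x => ?_⟩
      refine ⟨⟨e x, (e x).2.trans_le hcard⟩, ?_⟩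
      simp
    have hp' : (Subgroup.closure (Set.range (fun l => (p l : G))) : Set G).Finite := by
      refine hH.subset ?_
      have : Subgroup.closure (Set.range (fun l => (p l : G))) ≤ H := by
        rw [Subgroup.closure_le]
        rintro _ ⟨l, rfl⟩
        exact (p l).2
      exact this
    obtain ⟨h1, h2⟩ := hiter N ⟨fun l => (p l : G), hp'⟩
    rw [heN, Equiv.Perm.one_apply] at h2
    obtain ⟨y, hy⟩ := Quotient.exact h2.symm
    refine ⟨y, fun h hh => ?_⟩
    obtain ⟨l, hl⟩ := hp ⟨h, hh⟩
    have := hy l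
    simp only [hl] at this
    rw [MonoidHom.id_apply, homPow_coe, this]
  obtain ⟨N, rfl⟩ : ∃ M, N = M + 1 := ⟨N - 1, by omega⟩
  have := hbij.1
  rw [homPow_coe, Function.iterate_succ] at this
  exact this.of_comp

theorem exists_inj {G G' : Type*} [Group G] [Group G'] (hAE : AEEquivalent G G')
    (hfg : Group.FG G) (hfg' : Group.FG G')
    (hvf : VirtuallyFree G) (hvf' : VirtuallyFree G')
    (hco : CoHopfian G) (hco' : CoHopfian G') : ∃ θ : G →* G', Function.Injective θ := by
  obtain ⟨hrig, B, hB, hBc⟩ := part_one hfg hvf hco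
  obtain ⟨-, B', hB', hBc'⟩ := part_one hfg' hvf' hco'
  have fp : Group.IsFinitelyPresented G := by
    obtain ⟨K, hK, hKf, m, ⟨b⟩⟩ := vf_setup hfg hvf
    exact fp_of_basis K b
  have fp' : Group.IsFinitelyPresented G' := by
    obtain ⟨K, hK, hKf, m, ⟨b⟩⟩ := vf_setup hfg' hvf'
    exact fp_of_basis K b
  have hAE' : AEEquivalent G' G := fun φ hφ => (hAE φ hφ).symm
  obtain ⟨θ, hθ⟩ := exists_hom_conj hAE fp hB hBc B.ncard
  obtain ⟨ψ, hψ⟩ := exists_hom_conj hAE' fp' hB' hBc' B.ncard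
  refine ⟨θ, ?_⟩
  have hfin : ∀ p : Fin B.ncard → G, (Subgroup.closure (Set.range p) : Set G).Finite →
      (Subgroup.closure (Set.range (fun l => θ (p l))) : Set G').Finite := by
    intro p hp
    have h1 : Set.range (fun l => θ (p l)) = θ '' Set.range p := by
      rw [← Set.range_comp]; rfl
    rw [h1, ← MonoidHom.map_closure, Subgroup.coe_map]
    exact hp.image _
  have := rigid_power hrig hB hBc (ψ.comp θ) (fun p q hp hq h =>
    hθ p q hp hq (hψ _ _ (hfin p hp) (hfin q hq) h))
  exact Function.Injective.of_comp (f := ψ) (g := θ) this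

end Model

theorem iso_of_aeEquivalent {G : Type*} {G' : Type*} [Group G] [Group G']
    (hfg : Group.FG G) (hfg' : Group.FG G')
    (hvf : VirtuallyFree G) (hvf' : VirtuallyFree G')
    (hco : CoHopfian G) (hco' : CoHopfian G') (hAE : AEEquivalent G G') :
    Nonempty (G ≃* G') := by
  obtain ⟨θ, hθ⟩ := exists_inj hAE hfg hfg' hvf hvf' hco hco'
  obtain ⟨ψ, hψ⟩ := exists_inj (fun φ hφ => (hAE φ hφ).symm) hfg' hfg hvf' hvf hco' hco
  have h1 : Function.Surjective (ψ.comp θ) := by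
    apply hco
    rw [MonoidHom.coe_comp]
    exact hψ.comp hθ
  rw [MonoidHom.coe_comp] at h1
  have h2 : Function.Surjective ψ := h1.of_comp
  exact ⟨(MulEquiv.ofBijective ψ ⟨hψ, h2⟩).symm⟩

theorem elemEquiv_of_mulEquiv {G : Type*} {G' : Type*} [Group G] [Group G']
    (e : G ≃* G') : G ≅[groupLang] G' := by
  let f : groupLang.Equiv G G' :=
    { toEquiv := e.toEquiv
      map_fun' := by
        intro n f x
        change GroupFunc n at f
        cases f with
        | mul => exact map_mul e (x 0) (x 1)
        | inv => exact map_inv e (x 0)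
        | one => exact map_one e
      map_rel' := fun r _ => Empty.elim r }
  exact FirstOrder.Language.StrongHomClass.elementarilyEquivalent f

/-- Two finitely generated co-Hopfian virtually free groups are ∀∃-equivalent iff
elementarily equivalent iff isomorphic. -/
theorem coHopfian_virtuallyFree_aeEquiv_iff_elemEquiv_iff_iso
    (G : Type*) (G' : Type*) [Group G] [Group G']
    (hfg : Group.FG G) (hfg' : Group.FG G')
    (hvf : VirtuallyFree G) (hvf' : VirtuallyFree G')
    (hco : CoHopfian G) (hco' : CoHopfian G') :
    List.TFAE [AEEquivalent G G', G ≅[groupLang] G', Nonempty (G ≃* G')] := by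
  tfae_have 1 → 3 := iso_of_aeEquivalent hfg hfg' hvf hvf' hco hco'
  tfae_have 3 → 2 := fun ⟨e⟩ => elemEquiv_of_mulEquiv e
  tfae_have 2 → 1 := fun h φ _ => FirstOrder.Language.elementarilyEquivalent_iff.1 h φ
  tfae_finish
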